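/- Let ⟨V,E,d⟩ be a multi-weighted game graph in which every cycle contains at least one Player-1 vertex, and let B := (4|V|·‖E‖)^{2(d+2)³}. Player 1 wins the bounding game Γ⟨V,E,d⟩ from a vertex v₀ if and only if Player 1 has a strategy from v₀ such that every consistent play ρ satisfies ‖w(ρ|ₙ)‖ ≤ B for all n; consequently the bounding game is equivalent to a safety (reachability) game in which Player 2 attempts to see the norm of the total weight exceed B. -/

import Mathlib

/-! Multi-weighted game graphs, plays, strategies, energy and bounding games. -/

/-- A configuration: a vertex together with an accumulated weight vector. -/
abbrev Conf (V : Type) (d : ℕ) := V × (Fin d → ℤ)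

/-- A multi-weighted game graph: Player-1 vertices, a finite set of
weighted edges, such that every vertex has an outgoing edge. -/
structure MWG (V : Type) [Fintype V] [DecidableEq V] (d : ℕ) where
  P1 : Finset V
  E : Set (V × (Fin d → ℤ) × V)
  finE : E.Finite
  serial : ∀ v : V, ∃ u v', (v, u, v') ∈ E

variable {V : Type} [Fintype V] [DecidableEq V] {d : ℕ}

/-- The norm of an integer vector: max of absolute values of entries. -/
def vnorm {d : ℕ} (u : Fin d → ℤ) : ℕ := Finset.univ.sup fun i => (u i).natAbs

/-- `‖E‖`: the maximal norm of an edge label. -/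
noncomputable def enorm (G : MWG V d) : ℕ := G.finE.toFinset.sup fun e => vnorm e.2.1

/-- One step along an edge of the graph. -/
def Step (G : MWG V d) (c c' : Conf V d) : Prop := (c.1, c'.2 - c.2, c'.1) ∈ G.E

/-- A finite path, as a list of configurations. -/
def IsPathL (G : MWG V d) (π : List (Conf V d)) : Prop := π.Chain' (Step G)

/-- An infinite play from `v₀`, starting with weight `0`. -/
def IsPlay (G : MWG V d) (v₀ : V) (ρ : ℕ → Conf V d) : Prop :=
  ρ 0 = (v₀, 0) ∧ ∀ n, Step G (ρ n) (ρ (n+1))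

/-- A strategy: given the history (past configurations) and the current
configuration, choose a weighted move. -/
abbrev Strat (V : Type) (d : ℕ) := List (Conf V d) → Conf V d → (Fin d → ℤ) × V

/-- A valid strategy for the player owning the vertices in `P` always
chooses an edge of the game graph from the current vertex. -/
def ValidStrat (G : MWG V d) (P : Set V) (σ : Strat V d) : Prop :=
  ∀ h c, IsPathL G (h ++ [c]) → c.1 ∈ P → (c.1, (σ h c).1, (σ h c).2) ∈ G.E

/-- The history of a play before instant `n`. -/
def hist (ρ : ℕ → Conf V d) (n : ℕ) : List (Conf V d) := (List.range n).map ρ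

/-- A play is consistent with strategy `σ` of the player owning `P` if at
every configuration with vertex in `P` the next configuration is obtained
by playing the edge prescribed by `σ`. -/
def Consistent (P : Set V) (σ : Strat V d) (ρ : ℕ → Conf V d) : Prop :=
  ∀ n, (ρ n).1 ∈ P →
    ρ (n+1) = ((σ (hist ρ n) (ρ n)).2, (ρ n).2 + (σ (hist ρ n) (ρ n)).1)

/-- Player owning `P` wins the game with payoff `Win` from `v₀`. -/
def Wins (G : MWG V d) (P : Set V) (Win : (ℕ → Conf V d) → Prop) (v₀ : V) : Prop :=
  ∃ σ : Strat V d, ValidStrat G P σ ∧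
    ∀ ρ, IsPlay G v₀ ρ → Consistent P σ ρ → Win ρ

/-- Player 1's winning condition in the energy game with initial credit `b`. -/
def EnergyOK (b : Fin d → ℕ) (ρ : ℕ → Conf V d) : Prop :=
  ∀ n i, 0 ≤ (b i : ℤ) + (ρ n).2 i

/-- Player 1's winning condition in the bounding game: the norms of the
total weights of all the finite prefixes are bounded. -/
def BoundedPlay (ρ : ℕ → Conf V d) : Prop :=
  ∃ B : ℕ, ∀ n, vnorm ((ρ n).2) ≤ B

def P1WinsEnergy (G : MWG V d) (b : Fin d → ℕ) (v₀ : V) : Prop :=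
  Wins G (G.P1 : Set V) (EnergyOK b) v₀

def P2WinsEnergy (G : MWG V d) (b : Fin d → ℕ) (v₀ : V) : Prop :=
  Wins G {v | v ∉ G.P1} (fun ρ => ¬ EnergyOK b ρ) v₀

def P1WinsBounding (G : MWG V d) (v₀ : V) : Prop :=
  Wins G (G.P1 : Set V) BoundedPlay v₀

def P2WinsBounding (G : MWG V d) (v₀ : V) : Prop :=
  Wins G {v | v ∉ G.P1} (fun ρ => ¬ BoundedPlay ρ) v₀

/-- The negative unit vector `-e i`. -/
def negUnit (d : ℕ) (i : Fin d) : Fin d → ℤ := fun j => if j = i then -1 else 0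

/-- The lossy game graph: add a self-loop labelled `-e i` at each Player-1
vertex, for every coordinate `i`. -/
def lossy (G : MWG V d) : MWG V d where
  P1 := G.P1
  E := G.E ∪ (fun p : V × Fin d => (p.1, negUnit d p.2, p.1)) '' {p | p.1 ∈ G.P1}
  finE := G.finE.union ((Set.toFinite _).image _)
  serial := fun v => by
    obtain ⟨u, v', h⟩ := G.serial v
    exact ⟨u, v', Set.mem_union_left _ h⟩

/-- Every cycle of the game graph contains at least one Player-1 vertex. -/
def EveryCycleHasP1 (G : MWG V d) : Prop :=
  ∀ (n : ℕ) (c : ℕ → Conf V d), 0 < n → (∀ j < n, Step G (c j) (c (j+1))) →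
    (c 0).1 = (c n).1 → ∃ j < n, (c j).1 ∈ G.P1

namespace BG

theorem vnorm_le_iff {d : ℕ} (u : Fin d → ℤ) (B : ℕ) : vnorm u ≤ B ↔ ∀ i, |u i| ≤ (B : ℤ) := by
  unfold vnorm
  rw [Finset.sup_le_iff]
  constructor
  · intro h i
    have := h i (Finset.mem_univ i)
    rw [Int.abs_eq_natAbs]; exact_mod_cast this
  · intro h i _
    have := h i
    rw [Int.abs_eq_natAbs] at this; exact_mod_cast this

theorem abs_le_vnorm {d : ℕ} (u : Fin d → ℤ) (i : Fin d) : |u i| ≤ (vnorm u : ℤ) :=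
  (vnorm_le_iff u _).1 le_rfl i

theorem vnorm_zero {d : ℕ} : vnorm (0 : Fin d → ℤ) = 0 := by
  have := (vnorm_le_iff (0 : Fin d → ℤ) 0).2 (by simp)
  omega

theorem vnorm_add_le {d : ℕ} (u v : Fin d → ℤ) : vnorm (u + v) ≤ vnorm u + vnorm v := by
  rw [vnorm_le_iff]
  intro i
  have h1 := abs_le_vnorm u i
  have h2 := abs_le_vnorm v i
  have := abs_add_le (u i) (v i)
  push_cast
  simp only [Pi.add_apply]
  linarith

theorem vnorm_sum_le {d : ℕ} (N : ℕ) (l : List (Fin d → ℤ)) (h : ∀ u ∈ l, vnorm u ≤ N) :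
    vnorm l.sum ≤ l.length * N := by
  induction l with
  | nil => simp [vnorm_zero]
  | cons a l ih =>
    have h1 := ih (fun u hu => h u (by simp [hu]))
    have h2 := h a (by simp)
    have h3 := vnorm_add_le a l.sum
    simp only [List.sum_cons, List.length_cons]
    nlinarith

theorem dot_abs_le {d : ℕ} (u v : Fin d → ℤ) (A B : ℤ) (hu : ∀ i, |u i| ≤ A)
    (hv : ∀ i, |v i| ≤ B) : |u ⬝ᵥ v| ≤ d * (A * B) := by
  unfold dotProduct
  refine (Finset.abs_sum_le_sum_abs _ _).trans ?_
  have : ∀ i ∈ (Finset.univ : Finset (Fin d)), |u i * v i| ≤ A * B := by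
    intro i _
    rw [abs_mul]
    exact mul_le_mul (hu i) (hv i) (abs_nonneg _) ((abs_nonneg _).trans (hu i))
  refine (Finset.sum_le_sum this).trans ?_
  simp

theorem dot_list_sum {d : ℕ} (h : Fin d → ℤ) (l : List (Fin d → ℤ)) :
    h ⬝ᵥ l.sum = (l.map (fun u => h ⬝ᵥ u)).sum := by
  induction l with
  | nil => simp
  | cons a l ih => simp [dotProduct_add, ih]

theorem exists_abs_eq_vnorm {d : ℕ} (a : Fin d → ℤ) (ha : 0 < vnorm a) :
    ∃ i, |a i| = (vnorm a : ℤ) := by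
  by_contra hcon
  push Not at hcon
  have : vnorm a ≤ vnorm a - 1 := by
    rw [vnorm_le_iff]
    intro i
    have h1 := abs_le_vnorm a i
    have h2 := hcon i
    have : |a i| < (vnorm a : ℤ) := lt_of_le_of_ne h1 h2
    omega
  omega

theorem sq_le_dot_self {d : ℕ} (a : Fin d → ℤ) : (vnorm a : ℤ) ^ 2 ≤ a ⬝ᵥ a := by
  rcases Nat.eq_zero_or_pos (vnorm a) with h | h
  · rw [h]
    simp only [Nat.cast_zero, dotProduct]
    have : 0 ≤ ∑ i, a i * a i := Finset.sum_nonneg (fun i _ => mul_self_nonneg _)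
    simpa using this
  · obtain ⟨i, hi⟩ := exists_abs_eq_vnorm a h
    rw [← hi, sq_abs]
    unfold dotProduct
    have := Finset.single_le_sum (f := fun i => a i * a i) (fun i _ => mul_self_nonneg _)
      (Finset.mem_univ i)
    rw [pow_two]; exact this

theorem dirichlet {d : ℕ} (a : Fin d → ℤ) (M : ℕ) (hM : 0 < M) (ha : 0 < vnorm a) :
    ∃ (q : ℤ) (h : Fin d → ℤ), 1 ≤ q ∧ q ≤ (M : ℤ) ^ d ∧ (∀ i, |h i| ≤ q) ∧
      ∀ i, (M : ℤ) * |q * a i - vnorm a * h i| ≤ vnorm a := by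
  set s : ℤ := (vnorm a : ℤ) with hs
  have hs0 : 0 < s := by omega
  have hM0 : (0 : ℤ) < M := by omega
  have hbox : ∀ x : ℤ, (M * (x % s) / s).toNat < M := by
    intro x
    have h1 := Int.emod_lt_of_pos x hs0
    have h0 := Int.emod_nonneg x hs0.ne'
    have : M * (x % s) / s < M := by
      apply Int.ediv_lt_of_lt_mul hs0
      nlinarith
    omega
  let f : Fin (M ^ d + 1) → (Fin d → Fin M) := fun q i => ⟨_, hbox ((q : ℕ) * a i)⟩
  obtain ⟨q1, q2, hne, hf⟩ := Fintype.exists_ne_map_eq_of_card_lt f (by simp)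
  wlog hlt : q1 < q2 generalizing q1 q2
  · exact this q2 q1 hne.symm hf.symm (lt_of_le_of_ne (not_lt.1 hlt) hne.symm)
  have hlt' : (q1 : ℕ) < (q2 : ℕ) := hlt
  have hq2 : (q2 : ℕ) ≤ M ^ d := by omega
  have key : ∀ i, (M : ℤ) * |(((q2 : ℕ) : ℤ) - ((q1 : ℕ) : ℤ)) * a i -
      s * (((q2 : ℕ) : ℤ) * a i / s - ((q1 : ℕ) : ℤ) * a i / s)| < s := by
    intro i
    have h1 : (M * ((((q1 : ℕ) : ℤ) * a i) % s) / s).toNat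
        = (M * ((((q2 : ℕ) : ℤ) * a i) % s) / s).toNat := by
      have := congrArg (fun g => ((g i : Fin M) : ℕ)) hf
      simpa [f] using this
    set x1 := ((q1 : ℕ) : ℤ) * a i
    set x2 := ((q2 : ℕ) : ℤ) * a i
    have e1 := Int.emod_add_mul_ediv x1 s
    have e2 := Int.emod_add_mul_ediv x2 s
    have n1 : 0 ≤ M * (x1 % s) / s :=
      Int.ediv_nonneg (mul_nonneg hM0.le (Int.emod_nonneg _ hs0.ne')) hs0.le
    have n2 : 0 ≤ M * (x2 % s) / s :=
      Int.ediv_nonneg (mul_nonneg hM0.le (Int.emod_nonneg _ hs0.ne')) hs0.le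
    have h2 : M * (x1 % s) / s = M * (x2 % s) / s := by omega
    have f1 := Int.emod_add_mul_ediv (M * (x1 % s)) s
    have f2 := Int.emod_add_mul_ediv (M * (x2 % s)) s
    have b1 := Int.emod_lt_of_pos (M * (x1 % s)) hs0
    have b2 := Int.emod_lt_of_pos (M * (x2 % s)) hs0
    have c1 := Int.emod_nonneg (M * (x1 % s)) hs0.ne'
    have c2 := Int.emod_nonneg (M * (x2 % s)) hs0.ne'
    rw [h2] at f1
    have : (((q2 : ℕ) : ℤ) - ((q1 : ℕ) : ℤ)) * a i - s * (x2 / s - x1 / s) = x2 % s - x1 % s := by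
      have : (((q2 : ℕ) : ℤ) - ((q1 : ℕ) : ℤ)) * a i = x2 - x1 := by ring
      rw [this]; linarith
    rw [this, ← abs_of_pos hM0, ← abs_mul, abs_lt]
    constructor <;> nlinarith
  refine ⟨((q2 : ℕ) : ℤ) - ((q1 : ℕ) : ℤ), fun i => ((q2 : ℕ) : ℤ) * a i / s - ((q1 : ℕ) : ℤ) * a i / s,
    by omega, ?_, ?_, fun i => (key i).le⟩
  · have : ((q2 : ℕ) : ℤ) ≤ (M : ℤ) ^ d := by exact_mod_cast hq2
    omega
  · intro i
    have hk := key i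
    set q := ((q2 : ℕ) : ℤ) - ((q1 : ℕ) : ℤ)
    have hq : 1 ≤ q := by omega
    set y := ((q2 : ℕ) : ℤ) * a i / s - ((q1 : ℕ) : ℤ) * a i / s
    have ha := abs_le_vnorm a i
    rw [← hs] at ha
    have h1 : |q * a i - s * y| < s := by
      have := abs_nonneg (q * a i - s * y)
      nlinarith
    have h2 : s * |y| < s * (q + 1) := by
      have : s * |y| = |s * y| := by rw [abs_mul, abs_of_pos hs0]
      rw [this]
      have h3 : |s * y| ≤ |q * a i| + |q * a i - s * y| := by
        have := abs_sub_abs_le_abs_sub (s * y) (q * a i)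
        rw [abs_sub_comm] at this
        linarith
      have h4 : |q * a i| ≤ q * s := by
        rw [abs_mul, abs_of_pos (by omega : 0 < q)]
        exact mul_le_mul_of_nonneg_left ha (by omega)
      linarith
    have h5 : |y| < q + 1 := lt_of_mul_lt_mul_left h2 hs0.le
    change |y| ≤ q
    omega

end BG
namespace BG

def bad {d : ℕ} (p : List (Fin d → ℤ)) (h u : Fin d → ℤ) : Bool :=
  decide ((∀ g ∈ p, g ⬝ᵥ u = 0) ∧ 0 < h ⬝ᵥ u)

def CtlOK {d : ℕ} (c : ℕ) (κ : List (Fin d → ℤ) → List (Fin d → ℤ)) (us : List (Fin d → ℤ)) : Prop :=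
  ∀ pre mid, pre ++ mid <+: us → ∀ p h,
    (∀ m1 x, m1 ++ [x] <+: mid → p ++ [h] <+: κ (pre ++ m1)) → mid.countP (bad p h) ≤ c

theorem CtlOK.prefix {d c : ℕ} {κ : List (Fin d → ℤ) → List (Fin d → ℤ)} {us us' : List (Fin d → ℤ)}
    (h : CtlOK c κ us) (hp : us' <+: us) : CtlOK c κ us' :=
  fun pre mid hpm => h pre mid (hpm.trans hp)

def stepS {α : Type} (cl : List α → List α → Prop) [∀ a b, Decidable (cl a b)]
    (s : List α × List α) (u : α) : List α × List α :=
  if cl s.1 (s.2 ++ [u]) then (s.1 ++ s.2 ++ [u], []) else (s.1, s.2 ++ [u])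

def split {α : Type} (cl : List α → List α → Prop) [∀ a b, Decidable (cl a b)]
    (us : List α) : List α × List α := us.foldl (stepS cl) ([], [])

section
variable {α : Type} (cl : List α → List α → Prop) [∀ a b, Decidable (cl a b)]

theorem split_concat (us : List α) (u : α) : split cl (us ++ [u]) = stepS cl (split cl us) u := by
  simp [split]

theorem split_inv (us : List α) : (split cl us).1 ++ (split cl us).2 = us ∧
    ∀ m1, m1 <+: (split cl us).2 → split cl ((split cl us).1 ++ m1) = ((split cl us).1, m1) := by
  induction us using List.reverseRecOn with
  | nil =>
    refine ⟨by simp [split], ?_⟩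
    intro m1 h
    have : m1 = [] := by simpa [split] using h
    subst this; simp [split]
  | append_singleton us u ih =>
    obtain ⟨h1, h2⟩ := ih
    rw [split_concat]
    by_cases hc : cl (split cl us).1 ((split cl us).2 ++ [u])
    · have e : stepS cl (split cl us) u = (us ++ [u], []) := by
        simp only [stepS, if_pos hc, h1]
      rw [e]
      refine ⟨by simp, ?_⟩
      intro m1 h
      have : m1 = [] := by simpa using h
      subst this
      simp only [List.append_nil]
      rw [split_concat, e]
    · have e : stepS cl (split cl us) u = ((split cl us).1, (split cl us).2 ++ [u]) := by
        simp only [stepS, if_neg hc]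
      rw [e]
      refine ⟨by simp only; rw [← List.append_assoc, h1], ?_⟩
      intro m1 h
      rw [List.prefix_concat_iff] at h
      rcases h with h | h
      · subst h
        simp only
        rw [← List.append_assoc, h1, split_concat, e]
      · exact h2 m1 h
end

theorem mid_dot {d : ℕ} (h : Fin d → ℤ) (C : ℤ) (l : List (Fin d → ℤ)) (hl : ∀ u ∈ l, h ⬝ᵥ u ≤ C) :
    h ⬝ᵥ l.sum ≤ -(l.countP (fun u => decide (h ⬝ᵥ u < 0)) : ℤ) + l.countP (bad [] h) * C := by
  induction l with
  | nil => simp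
  | cons a l ih =>
    have h1 := ih (fun u hu => hl u (by simp [hu]))
    have h2 := hl a (by simp)
    rw [List.sum_cons, dotProduct_add, List.countP_cons, List.countP_cons]
    simp only [bad, List.not_mem_nil, false_implies, implies_true, true_and, decide_eq_true_eq] at *
    rcases lt_trichotomy (h ⬝ᵥ a) 0 with h3 | h3 | h3
    · rw [if_pos h3, if_neg (by omega)]; push_cast; linarith
    · rw [if_neg (by omega), if_neg (by omega)]; push_cast; linarith
    · rw [if_neg (by omega), if_pos h3]; push_cast; linarith

theorem mid_split {d : ℕ} (h : Fin d → ℤ) (N : ℕ) (l : List (Fin d → ℤ)) (hl : ∀ u ∈ l, vnorm u ≤ N) :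
    ∃ e, l.sum = (l.filter (fun u => decide (h ⬝ᵥ u = 0))).sum + e ∧
      vnorm e ≤ (l.countP (fun u => decide (h ⬝ᵥ u < 0)) + l.countP (bad [] h)) * N := by
  induction l with
  | nil => exact ⟨0, by simp, by simp [vnorm_zero]⟩
  | cons a l ih =>
    obtain ⟨e, h1, h4⟩ := ih (fun u hu => hl u (by simp [hu]))
    have h2 := hl a (by simp)
    have h5 := vnorm_add_le a e
    rw [List.sum_cons, List.countP_cons, List.countP_cons, List.filter_cons, h1]
    simp only [bad, List.not_mem_nil, false_implies, implies_true, true_and, decide_eq_true_eq] at *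
    rcases lt_trichotomy (h ⬝ᵥ a) 0 with h3 | h3 | h3
    · rw [if_pos h3, if_neg (by omega), if_neg (by omega)]
      refine ⟨a + e, by abel, ?_⟩
      nlinarith
    · rw [if_pos h3, if_neg (by omega), if_neg (by omega)]
      refine ⟨e, by simp [add_assoc], by simpa using h4⟩
    · rw [if_neg (by omega), if_neg (by omega), if_pos h3]
      refine ⟨a + e, by abel, ?_⟩
      nlinarith

/-- numeric descent -/
theorem descent {d : ℕ} (a δ h : Fin d → ℤ) (q s M H N K : ℤ) (hd : 1 ≤ (d : ℤ)) (hN : 1 ≤ N)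
    (hK : 1 ≤ K) (hM : M = 12 * d * N) (hq1 : 1 ≤ q) (hqH : q ≤ H)
    (hs : 9 * d * H * N ^ 2 * K ≤ s)
    (he : ∀ i, M * |q * a i - s * h i| ≤ s) (hδ : ∀ i, |δ i| ≤ 3 * N * K)
    (hh : 4 * (h ⬝ᵥ δ) ≤ -3 * K) :
    (a + δ) ⬝ᵥ (a + δ) ≤ a ⬝ᵥ a := by
  have hM0 : 0 < M := by rw [hM]; positivity
  have hH : 1 ≤ H := by linarith
  have hs0 : 0 < s := by
    have : 0 < 9 * d * H * N ^ 2 * K := by positivity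
    linarith
  have e1 : (a + δ) ⬝ᵥ (a + δ) = a ⬝ᵥ a + 2 * (a ⬝ᵥ δ) + δ ⬝ᵥ δ := by
    rw [add_dotProduct, dotProduct_add, dotProduct_add, dotProduct_comm δ a]; ring
  set e : Fin d → ℤ := fun i => q * a i - s * h i with hedef
  have e2 : q * (a ⬝ᵥ δ) = s * (h ⬝ᵥ δ) + e ⬝ᵥ δ := by
    simp only [dotProduct, Finset.mul_sum, ← Finset.sum_add_distrib, hedef]
    apply Finset.sum_congr rfl
    intro i _; ring
  have e3 : M * (e ⬝ᵥ δ) ≤ d * (s * (3 * N * K)) := by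
    have := dot_abs_le (M • e) δ s (3 * N * K) (by
      intro i
      simp only [Pi.smul_apply, smul_eq_mul, abs_mul, abs_of_pos hM0]
      exact he i) hδ
    rw [smul_dotProduct, smul_eq_mul] at this
    exact (le_abs_self _).trans this
  have e4 : 4 * (e ⬝ᵥ δ) ≤ s * K := by
    have : (3 * d * N) * (4 * (e ⬝ᵥ δ)) ≤ (3 * d * N) * (s * K) := by
      rw [hM] at e3; nlinarith
    exact le_of_mul_le_mul_left this (by positivity)
  have e5 : δ ⬝ᵥ δ ≤ d * ((3 * N * K) * (3 * N * K)) := (le_abs_self _).trans (dot_abs_le δ δ _ _ hδ hδ)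
  have e6 : q * (δ ⬝ᵥ δ) ≤ s * K := by
    have h1 : q * (δ ⬝ᵥ δ) ≤ H * (d * ((3 * N * K) * (3 * N * K))) := by
      apply mul_le_mul hqH e5
      · have := sq_le_dot_self δ; nlinarith [sq_nonneg (vnorm δ : ℤ)]
      · linarith
    have h2 : H * (d * ((3 * N * K) * (3 * N * K))) = (9 * d * H * N ^ 2 * K) * K := by ring
    rw [h2] at h1
    exact h1.trans (mul_le_mul_of_nonneg_right hs (by linarith))
  have e7 : 4 * (s * (h ⬝ᵥ δ)) ≤ -3 * (s * K) := by nlinarith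
  have e8 : q * (2 * (a ⬝ᵥ δ) + δ ⬝ᵥ δ) ≤ q * 0 := by nlinarith
  have := le_of_mul_le_mul_left e8 (by linarith)
  rw [e1]; linarith

/-- the approximating direction is not orthogonal -/
theorem not_orth {d : ℕ} (a h : Fin d → ℤ) (q M N : ℤ) (hd : 1 ≤ (d : ℤ)) (hN : 1 ≤ N)
    (hM : M = 12 * d * N) (hq1 : 1 ≤ q) (hs : 0 < vnorm a)
    (he : ∀ i, M * |q * a i - vnorm a * h i| ≤ vnorm a) : h ⬝ᵥ a ≠ 0 := by
  intro h0
  set s : ℤ := (vnorm a : ℤ) with hsd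
  have hs0 : 0 < s := by omega
  have hM0 : 0 < M := by rw [hM]; positivity
  set e : Fin d → ℤ := fun i => q * a i - s * h i with hedef
  have e2 : q * (a ⬝ᵥ a) = s * (h ⬝ᵥ a) + e ⬝ᵥ a := by
    simp only [dotProduct, Finset.mul_sum, ← Finset.sum_add_distrib, hedef]
    apply Finset.sum_congr rfl
    intro i _; ring
  have e3 : M * (e ⬝ᵥ a) ≤ d * (s * s) := by
    have := dot_abs_le (M • e) a s s (by
      intro i
      simp only [Pi.smul_apply, smul_eq_mul, abs_mul, abs_of_pos hM0]
      exact he i) (abs_le_vnorm a)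
    rw [smul_dotProduct, smul_eq_mul] at this
    exact (le_abs_self _).trans this
  have e4 := sq_le_dot_self a
  rw [← hsd] at e4
  rw [h0, mul_zero, zero_add] at e2
  rw [← e2] at e3
  have h1 : s ^ 2 ≤ q * (a ⬝ᵥ a) := by nlinarith [sq_nonneg s]
  have h2 : M * s ^ 2 ≤ d * (s * s) := (mul_le_mul_of_nonneg_left h1 hM0.le).trans e3
  have h3 : (d : ℤ) < M := by rw [hM]; nlinarith
  nlinarith [mul_pos hs0 hs0]

end BG
namespace BG

def Rb (X : ℕ) : ℕ → ℕ
  | 0 => 0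
  | n + 1 => X * (Rb X n + X)

theorem Rb_bound (X : ℕ) (hX : 2 ≤ X) (n : ℕ) : Rb X n + X ≤ X ^ (2 * n + 1) := by
  induction n with
  | zero => simp [Rb]
  | succ n ih =>
    have h1 : X ^ (2 * (n + 1) + 1) = X * (X * X ^ (2 * n + 1)) := by ring
    have h2 : 1 ≤ X ^ (2 * n + 1) := Nat.one_le_pow _ _ (by omega)
    simp only [Rb]
    rw [h1]
    generalize X ^ (2 * n + 1) = Y at *
    have h3 : 2 * Y ≤ X * Y := Nat.mul_le_mul_right _ hX
    have h4 : Rb X n + X + 1 ≤ X * Y := by omega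
    have := Nat.mul_le_mul_left X h4
    linarith

theorem const_bound (d N R : ℕ) (hd : 1 ≤ d) (hN : 1 ≤ N) (H K : ℕ) (hH : H = (12 * d * N) ^ d)
    (hK : K = R + 4 * N ^ 2 * d * H) :
    d * (9 * d * H * N ^ 2 * K + N) + 3 * N * K ≤
      (12 * d * N) ^ (d + 2) * (R + (12 * d * N) ^ (d + 2)) := by
  have hX : (12 * d * N) ^ (d + 2) = H * (144 * (d ^ 2 * N ^ 2)) := by rw [hH]; ring
  rw [hX]
  have hH1 : 1 ≤ H := by rw [hH]; exact Nat.one_le_pow _ _ (by positivity)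
  have hK1 : 1 ≤ K := by
    have : 1 ≤ 4 * N ^ 2 * d * H := by
      have : 0 < 4 * N ^ 2 * d * H := by positivity
      omega
    omega
  have h1 : K ≤ R + H * (144 * (d ^ 2 * N ^ 2)) := by
    rw [hK]
    have : 4 * N ^ 2 * d * H ≤ H * (144 * (d ^ 2 * N ^ 2)) := by
      have : d ≤ d ^ 2 := Nat.le_self_pow (by norm_num) d
      calc 4 * N ^ 2 * d * H ≤ 4 * N ^ 2 * d ^ 2 * H := by gcongr
        _ ≤ H * (144 * (d ^ 2 * N ^ 2)) := by nlinarith [Nat.zero_le (H * (d ^ 2 * N ^ 2))]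
    omega
  have h2 : d * (9 * d * H * N ^ 2 * K + N) + 3 * N * K ≤ (H * (144 * (d ^ 2 * N ^ 2))) * K := by
    have a1 : d * N ≤ (H * (d ^ 2 * N ^ 2)) * K := by
      calc d * N = 1 * (d * N) * 1 := by ring
        _ ≤ H * (d ^ 2 * N ^ 2) * K := by
          gcongr
          · exact Nat.le_self_pow (by norm_num) d
          · exact Nat.le_self_pow (by norm_num) N
    have a2 : N * K ≤ (H * (d ^ 2 * N ^ 2)) * K := by
      calc N * K = 1 * (1 * N) * K := by ring
        _ ≤ H * (d ^ 2 * N ^ 2) * K := by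
          gcongr
          · exact Nat.one_le_pow _ _ hd
          · exact Nat.le_self_pow (by norm_num) N
    nlinarith
  exact h2.trans (Nat.mul_le_mul_left _ h1)

def castV {d : ℕ} (u : Fin d → ℤ) : Fin d → ℚ := fun i => (u i : ℚ)

theorem castV_sum_mem {d : ℕ} (F : Submodule ℚ (Fin d → ℚ)) (l : List (Fin d → ℤ))
    (h : ∀ u ∈ l, castV u ∈ F) : castV l.sum ∈ F := by
  induction l with
  | nil =>
    have : castV (([] : List (Fin d → ℤ)).sum) = 0 := by ext i; simp [castV]
    rw [this]; exact F.zero_mem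
  | cons a l ih =>
    have : castV ((a :: l).sum) = castV a + castV l.sum := by ext i; simp [castV]
    rw [this]
    exact F.add_mem (h a (by simp)) (ih fun u hu => h u (by simp [hu]))

def dotL {d : ℕ} (h : Fin d → ℤ) : (Fin d → ℚ) →ₗ[ℚ] ℚ where
  toFun x := castV h ⬝ᵥ x
  map_add' x y := dotProduct_add _ _ _
  map_smul' c x := by simp [dotProduct_smul]

theorem dotL_cast {d : ℕ} (h u : Fin d → ℤ) : dotL h (castV u) = ((h ⬝ᵥ u : ℤ) : ℚ) := by
  simp [dotL, castV, dotProduct]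

/-- the inner game inherits the counting condition -/
theorem sub_ok {d c : ℕ} (κ κ' : List (Fin d → ℤ) → List (Fin d → ℤ)) (us pre mid : List (Fin d → ℤ))
    (h : Fin d → ℤ) (hok : CtlOK c κ us) (hus : pre ++ mid <+: us)
    (hκ : ∀ m1 x, m1 ++ [x] <+: mid → κ (pre ++ m1) =
      h :: κ' (m1.filter (fun u => decide (h ⬝ᵥ u = 0)))) :
    CtlOK c κ' (mid.filter (fun u => decide (h ⬝ᵥ u = 0))) := by
  intro pre' mid' hp p h' hlab
  rcases List.eq_nil_or_concat mid' with rfl | ⟨mid'', y, rfl⟩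
  · simp
  obtain ⟨rest, hrest⟩ := hp
  have e0 : mid.filter (fun u => decide (h ⬝ᵥ u = 0)) = pre' ++ (mid'' ++ (y :: rest)) := by
    rw [← hrest]; simp
  rw [List.filter_eq_append_iff] at e0
  obtain ⟨A, Z, hmid, hA, hZ⟩ := e0
  rw [List.filter_eq_append_iff] at hZ
  obtain ⟨B1, Z2, hZe, hB1, hZ2⟩ := hZ
  rw [List.filter_eq_cons_iff] at hZ2
  obtain ⟨B2, Z3, hZ2e, hB2, hy, hZ3⟩ := hZ2
  have hB2' : B2.filter (fun u => decide (h ⬝ᵥ u = 0)) = [] := by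
    rw [List.filter_eq_nil_iff]; simpa using hB2
  have hB : mid = A ++ ((B1 ++ B2) ++ [y]) ++ Z3 := by
    rw [hmid, hZe, hZ2e]; simp
  have hBf : ((B1 ++ B2) ++ [y]).filter (fun u => decide (h ⬝ᵥ u = 0)) = mid'' ++ [y] := by
    simp only [List.filter_append, hB1, hB2', List.append_nil]
    simpa using hy
  have hBf1 : (B1 ++ B2).filter (fun u => decide (h ⬝ᵥ u = 0)) = mid'' := by
    simp only [List.filter_append, hB1, hB2', List.append_nil]
  have hpre : (pre ++ A) ++ ((B1 ++ B2) ++ [y]) <+: us := by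
    refine List.IsPrefix.trans ⟨Z3, ?_⟩ hus
    rw [hB]; simp
  have := hok (pre ++ A) ((B1 ++ B2) ++ [y]) hpre (h :: p) h' (by
    intro m1 x hm1
    have hm : A ++ m1 ++ [x] <+: mid := by
      rw [hB]
      refine List.IsPrefix.trans ?_ (List.prefix_append _ _)
      rw [List.append_assoc]
      exact (List.prefix_append_right_inj _).2 hm1
    rw [List.append_assoc, hκ (A ++ m1) x hm, List.cons_append, List.cons_prefix_cons]
    refine ⟨rfl, ?_⟩
    rw [List.filter_append, hA]
    have hm1' : m1 <+: B1 ++ B2 := by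
      rw [List.prefix_concat_iff] at hm1
      rcases hm1 with hm1 | hm1
      · have := List.append_inj_left' hm1 rfl
        rw [this]
      · exact (List.prefix_append _ _).trans hm1
    have hf : m1.filter (fun u => decide (h ⬝ᵥ u = 0)) <+: mid'' := by
      rw [← hBf1]; exact hm1'.filter _
    obtain ⟨t, ht⟩ := hf
    have : ∃ x', m1.filter (fun u => decide (h ⬝ᵥ u = 0)) ++ [x'] <+: mid'' ++ [y] := by
      rw [← ht]
      cases t with
      | nil => exact ⟨y, by simp⟩
      | cons z t => exact ⟨z, t ++ [y], by simp⟩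
    obtain ⟨x', hx'⟩ := this
    exact hlab _ x' (by simpa using hx'))
  rw [List.concat_eq_append, ← hBf, List.countP_filter]
  refine le_trans (le_of_eq ?_) this
  apply List.countP_congr
  intro x _
  simp only [bad, Bool.and_eq_true, decide_eq_true_eq, List.mem_cons, forall_eq_or_imp]
  tauto

theorem ctl {d : ℕ} (N c : ℕ) (hd : 1 ≤ d) (hN : 1 ≤ N) (hc : c ≤ N) (n : ℕ) :
    ∀ F : Submodule ℚ (Fin d → ℚ), Module.finrank ℚ F ≤ n →
    ∃ κ : List (Fin d → ℤ) → List (Fin d → ℤ), ∀ us, (∀ u ∈ us, vnorm u ≤ N ∧ castV u ∈ F) →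
      CtlOK c κ us → vnorm us.sum ≤ Rb ((12 * d * N) ^ (d + 2)) n := by
  induction n with
  | zero =>
    intro F hF
    refine ⟨fun _ => [], fun us hus _ => ?_⟩
    have hF0 : F = ⊥ := Submodule.finrank_eq_zero.1 (by omega)
    have : castV us.sum ∈ F := castV_sum_mem F us (fun u hu => (hus u hu).2)
    rw [hF0, Submodule.mem_bot] at this
    have : us.sum = 0 := by
      ext i
      have := congrFun this i
      simpa [castV] using this
    rw [this, vnorm_zero]; simp
  | succ n ih =>
    intro F hF
    have hsub : ∀ h : Fin d → ℤ, ∃ κ : List (Fin d → ℤ) → List (Fin d → ℤ),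
        Module.finrank ℚ ↥(F ⊓ LinearMap.ker (dotL h)) ≤ n →
        ∀ us, (∀ u ∈ us, vnorm u ≤ N ∧ castV u ∈ F ⊓ LinearMap.ker (dotL h)) →
        CtlOK c κ us → vnorm us.sum ≤ Rb ((12 * d * N) ^ (d + 2)) n := by
      intro h
      by_cases hr : Module.finrank ℚ ↥(F ⊓ LinearMap.ker (dotL h)) ≤ n
      · obtain ⟨κ, hκ⟩ := ih _ hr
        exact ⟨κ, fun _ => hκ⟩
      · exact ⟨fun _ => [], fun h => absurd h hr⟩
    choose κ' hκ' using hsub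
    set R := Rb ((12 * d * N) ^ (d + 2)) n with hR
    have hdir : ∀ a : Fin d → ℤ, ∃ (q : ℤ) (h : Fin d → ℤ), 0 < vnorm a → 1 ≤ q ∧
        q ≤ ((12 * d * N : ℕ) : ℤ) ^ d ∧ (∀ i, |h i| ≤ q) ∧
        ∀ i, ((12 * d * N : ℕ) : ℤ) * |q * a i - vnorm a * h i| ≤ vnorm a := by
      intro a
      by_cases ha : 0 < vnorm a
      · obtain ⟨q, h, hh⟩ := dirichlet a (12 * d * N) (by positivity) ha
        exact ⟨q, h, fun _ => hh⟩
      · exact ⟨0, 0, fun h => absurd h ha⟩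
    choose qc hc' hqh using hdir
    obtain ⟨H, hH⟩ : ∃ H, H = (12 * d * N) ^ d := ⟨_, rfl⟩
    obtain ⟨K, hK⟩ : ∃ K, K = R + 4 * N ^ 2 * d * H := ⟨_, rfl⟩
    obtain ⟨S0, hS0⟩ : ∃ S0, S0 = 9 * d * H * N ^ 2 * K := ⟨_, rfl⟩
    have hcb := const_bound d N R hd hN H K hH hK
    have hH1 : 1 ≤ H := by rw [hH]; exact Nat.one_le_pow _ _ (by positivity)
    have hK2 : N ≤ K ∧ R ≤ K := by
      have : N ≤ 4 * N ^ 2 * d * H := by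
        calc N = 1 * N * 1 * 1 := by ring
          _ ≤ 4 * N ^ 2 * d * H := by
            gcongr
            · norm_num
            · exact Nat.le_self_pow (by norm_num) N
      omega
    have hS0pos : 0 < S0 := by rw [hS0]; have : 0 < K := by omega
                               positivity
    let cl : List (Fin d → ℤ) → List (Fin d → ℤ) → Prop := fun pre mid =>
      vnorm pre.sum < S0 ∨ K ≤ mid.countP (fun u => decide (hc' pre.sum ⬝ᵥ u < 0))
    haveI : ∀ a b, Decidable (cl a b) := fun a b => inferInstanceAs (Decidable (_ ∨ _))
    let κ : List (Fin d → ℤ) → List (Fin d → ℤ) := fun us =>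
      if vnorm (split cl us).1.sum < S0 then [] else
        hc' (split cl us).1.sum :: κ' (hc' (split cl us).1.sum)
          ((split cl us).2.filter (fun u => decide (hc' (split cl us).1.sum ⬝ᵥ u = 0)))
    refine ⟨κ, ?_⟩
    -- facts about the current phase
    have phase : ∀ us, (∀ u ∈ us, vnorm u ≤ N ∧ castV u ∈ F) → CtlOK c κ us →
        ¬ vnorm (split cl us).1.sum < S0 →
        vnorm ((split cl us).2.filter
          (fun u => decide (hc' (split cl us).1.sum ⬝ᵥ u = 0))).sum ≤ R ∧
        (split cl us).2.countP (bad [] (hc' (split cl us).1.sum)) ≤ c := by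
      intro us hus hok hbig
      obtain ⟨hsp, hpref⟩ := split_inv cl us
      set pre := (split cl us).1 with hpre
      set mid := (split cl us).2 with hmid
      have hlab : ∀ m1 x, m1 ++ [x] <+: mid → κ (pre ++ m1) =
          hc' pre.sum :: κ' (hc' pre.sum) (m1.filter (fun u => decide (hc' pre.sum ⬝ᵥ u = 0))) := by
        intro m1 x hm
        have := hpref m1 ((List.prefix_append _ _).trans hm)
        simp only [κ, this]
        rw [if_neg hbig]
      constructor
      · apply hκ' (hc' pre.sum)
        · have ha : 0 < vnorm pre.sum := by omega
          obtain ⟨hq1, hq2, hh, he⟩ := hqh _ ha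
          have hno := not_orth pre.sum (hc' pre.sum) (qc pre.sum) _ (N : ℤ) (by exact_mod_cast hd)
            (by exact_mod_cast hN) (by push_cast; rfl) hq1 ha he
          have hmemF : castV pre.sum ∈ F := castV_sum_mem F pre (fun u hu =>
            (hus u (by rw [← hsp]; simp [hu])).2)
          have hlt : F ⊓ LinearMap.ker (dotL (hc' pre.sum)) < F := by
            refine lt_of_le_of_ne inf_le_left ?_
            intro heq
            rw [← heq] at hmemF
            have := hmemF.2
            rw [SetLike.mem_coe, LinearMap.mem_ker, dotL_cast] at this
            exact hno (by exact_mod_cast this)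
          have := Submodule.finrank_lt_finrank_of_lt hlt
          omega
        · intro u hu
          rw [List.mem_filter] at hu
          have h1 := hus u (by rw [← hsp]; simp [hu.1])
          refine ⟨h1.1, h1.2, ?_⟩
          rw [SetLike.mem_coe, LinearMap.mem_ker, dotL_cast]
          have := hu.2
          simp only [decide_eq_true_eq] at this
          rw [this]; simp
        · exact sub_ok κ _ us pre mid _ hok (by rw [hsp]) hlab
      · apply hok pre mid (by rw [hsp])
        intro m1 x hm
        rw [hlab m1 x hm]
        simp
    -- norm bound for mid
    have midb : ∀ (h : Fin d → ℤ) (l : List (Fin d → ℤ)), (∀ u ∈ l, vnorm u ≤ N) →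
        vnorm (l.filter (fun u => decide (h ⬝ᵥ u = 0))).sum ≤ R →
        l.countP (bad [] h) ≤ c → l.countP (fun u => decide (h ⬝ᵥ u < 0)) ≤ K →
        vnorm l.sum ≤ 3 * N * K := by
      intro h l hl h1 h2 h3
      obtain ⟨e, he1, he2⟩ := mid_split h N l hl
      rw [he1]
      refine (vnorm_add_le _ _).trans ?_
      have : (l.countP (fun u => decide (h ⬝ᵥ u < 0)) + l.countP (bad [] h)) * N ≤ (K + K) * N := by
        gcongr; omega
      nlinarith
    have inv : ∀ us, (∀ u ∈ us, vnorm u ≤ N ∧ castV u ∈ F) → CtlOK c κ us →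
        ((split cl us).1.sum ⬝ᵥ (split cl us).1.sum ≤ d * ((S0 + N : ℤ) * (S0 + N))) ∧
        ((split cl us).2 ≠ [] → ¬ vnorm (split cl us).1.sum < S0) ∧
        (split cl us).2.countP (fun u => decide (hc' (split cl us).1.sum ⬝ᵥ u < 0)) < K := by
      intro us
      induction us using List.reverseRecOn with
      | nil =>
        intro _ _
        simp only [split, List.foldl_nil, List.sum_nil, dotProduct_zero, List.countP_nil]
        refine ⟨by positivity, by simp, by omega⟩
      | append_singleton us u ihu =>
        intro hus hok
        have hok' := hok.prefix (List.prefix_append us [u])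
        have hus' : ∀ u ∈ us, vnorm u ≤ N ∧ castV u ∈ F := fun x hx => hus x (by simp [hx])
        obtain ⟨i1, i2, i3⟩ := ihu hus' hok'
        have ph := phase us hus' hok'
        have hsp := (split_inv cl us).1
        rw [split_concat]
        obtain ⟨pre, hpre⟩ : ∃ pre, pre = (split cl us).1 := ⟨_, rfl⟩
        obtain ⟨mid, hmid⟩ : ∃ mid, mid = (split cl us).2 := ⟨_, rfl⟩
        have hst : stepS cl (split cl us) u =
            if cl pre (mid ++ [u]) then (pre ++ mid ++ [u], []) else (pre, mid ++ [u]) := by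
          simp only [stepS, hpre, hmid]
        rw [hst]
        rw [← hpre] at i1 i2 i3 ph hsp
        rw [← hmid] at i2 i3 ph hsp
        have hu : vnorm u ≤ N := (hus u (by simp)).1
        by_cases hcl : cl pre (mid ++ [u])
        · rw [if_pos hcl]
          refine ⟨?_, by simp, by simp only [List.countP_nil]; omega⟩
          simp only
          by_cases hsm : vnorm pre.sum < S0
          · have hm : mid = [] := by
              by_contra hm
              exact i2 hm hsm
            subst hm
            have hb : vnorm (pre ++ [] ++ [u]).sum ≤ S0 + N := by
              simp only [List.append_nil, List.sum_append, List.sum_singleton]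
              refine (vnorm_add_le _ _).trans ?_
              omega
            have hb' := (vnorm_le_iff _ _).1 hb
            refine (le_abs_self _).trans ?_
            refine (dot_abs_le _ _ _ _ hb' hb').trans ?_
            push_cast
            exact le_rfl
          · obtain ⟨p1, p2⟩ := ph hsm
            have ha : 0 < vnorm pre.sum := by omega
            obtain ⟨hq1, hq2, hh, he⟩ := hqh _ ha
            set h := hc' pre.sum with hhdef
            rcases hcl with hcl | hcl
            · exact absurd hcl hsm
            simp only [← hhdef] at hcl
            have hneg : h ⬝ᵥ u < 0 := by
              by_contra hneg
              rw [List.countP_append, List.countP_singleton] at hcl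
              simp only [hneg, decide_false] at hcl
              simp at hcl
              omega
            have hf : (mid ++ [u]).filter (fun u => decide (h ⬝ᵥ u = 0)) =
                mid.filter (fun u => decide (h ⬝ᵥ u = 0)) := by
              rw [List.filter_append]
              have : ¬ (h ⬝ᵥ u = 0) := by omega
              simp [this]
            have hcb' : (mid ++ [u]).countP (bad [] h) ≤ c := by
              rw [List.countP_append, List.countP_singleton]
              have : bad [] h u = false := by
                simp only [bad, decide_eq_false_iff_not]
                intro hx; omega
              rw [this]; simpa using p2
            have hcn : (mid ++ [u]).countP (fun u => decide (h ⬝ᵥ u < 0)) ≤ K := by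
              rw [List.countP_append, List.countP_singleton]
              split <;> omega
            have hml : ∀ x ∈ mid ++ [u], vnorm x ≤ N := by
              intro x hx
              apply (hus x _).1
              rw [← hsp, List.append_assoc]
              exact List.mem_append_right _ hx
            have hδ := midb h (mid ++ [u]) hml (by rw [hf]; exact p1) hcb' hcn
            have hhH : ∀ i, |h i| ≤ (H : ℤ) := fun i => (hh i).trans (by
              rw [hH]; push_cast; push_cast at hq2; exact hq2)
            have hdot := mid_dot h (d * ((H : ℤ) * N)) (mid ++ [u]) (fun x hx =>
              (le_abs_self _).trans (dot_abs_le h x H N hhH ((vnorm_le_iff _ _).1 (hml x hx))))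
            have hfin : 4 * (h ⬝ᵥ (mid ++ [u]).sum) ≤ -3 * (K : ℤ) := by
              have e1 : (K : ℤ) ≤ ((mid ++ [u]).countP (fun u => decide (h ⬝ᵥ u < 0)) : ℤ) := by
                exact_mod_cast hcl
              have e2 : ((mid ++ [u]).countP (bad [] h) : ℤ) * (d * ((H : ℤ) * N)) ≤
                  N * (d * ((H : ℤ) * N)) := by
                apply mul_le_mul_of_nonneg_right _ (by positivity)
                exact_mod_cast hcb'.trans hc
              have e3 : (K : ℤ) = R + 4 * N ^ 2 * d * H := by rw [hK]; push_cast; ring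
              have e4 : (0 : ℤ) ≤ R := by positivity
              nlinarith
            have hdesc := descent pre.sum (mid ++ [u]).sum h (qc pre.sum) (vnorm pre.sum)
              ((12 * d * N : ℕ) : ℤ) H N K (by exact_mod_cast hd) (by exact_mod_cast hN)
              (by have : 1 ≤ K := by omega
                  exact_mod_cast this) (by push_cast; rfl) hq1
              (by rw [hH]; push_cast; push_cast at hq2; exact hq2)
              (by have : S0 ≤ vnorm pre.sum := by omega
                  rw [hS0] at this
                  exact_mod_cast this) he
              (by intro i
                  have := (vnorm_le_iff _ _).1 hδ i
                  push_cast at this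
                  exact this) hfin
            have hsum : (pre ++ mid ++ [u]).sum = pre.sum + (mid ++ [u]).sum := by
              rw [List.append_assoc, List.sum_append]
            rw [hsum]
            exact hdesc.trans i1
        · rw [if_neg hcl]
          refine ⟨i1, ?_, ?_⟩
          · intro _ hx
            exact hcl (Or.inl hx)
          · simp only
            by_contra hx
            exact hcl (Or.inr (not_lt.1 hx))
    intro us hus hok
    obtain ⟨i1, i2, i3⟩ := inv us hus hok
    have hsp := (split_inv cl us).1
    have ph := phase us hus hok
    obtain ⟨pre, hpre⟩ : ∃ pre, pre = (split cl us).1 := ⟨_, rfl⟩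
    obtain ⟨mid, hmid⟩ : ∃ mid, mid = (split cl us).2 := ⟨_, rfl⟩
    rw [← hpre] at i1 i2 i3 ph hsp
    rw [← hmid] at i2 i3 ph hsp
    have hb1 : vnorm pre.sum ≤ d * (S0 + N) := by
      have h1 := (sq_le_dot_self pre.sum).trans i1
      have h2 : vnorm pre.sum ^ 2 ≤ d * ((S0 + N) * (S0 + N)) := by exact_mod_cast h1
      by_contra hlt
      push Not at hlt
      have h3 : (d * (S0 + N)) ^ 2 < vnorm pre.sum ^ 2 := by gcongr
      have h4 : d * ((S0 + N) * (S0 + N)) ≤ (d * (S0 + N)) ^ 2 := by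
        have : d ≤ d ^ 2 := Nat.le_self_pow (by norm_num) d
        calc d * ((S0 + N) * (S0 + N)) ≤ d ^ 2 * ((S0 + N) * (S0 + N)) := by gcongr
          _ = _ := by ring
      omega
    have hb2 : vnorm mid.sum ≤ 3 * N * K := by
      by_cases hm : mid = []
      · rw [hm]; simp [vnorm_zero]
      · obtain ⟨p1, p2⟩ := ph (i2 hm)
        exact midb _ mid (fun x hx => (hus x (by rw [← hsp]; simp [hx])).1) p1 p2 i3.le
    rw [← hsp, List.sum_append]
    refine (vnorm_add_le _ _).trans ?_
    simp only [Rb]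
    refine le_trans ?_ hcb
    rw [← hS0]
    omega

end BG
namespace BG

abbrev Ent (V : Type) (d : ℕ) := V × List (Fin d → ℤ) × (Fin d → ℤ)

def wsum {V : Type} {d : ℕ} (l : List (Ent V d)) : Fin d → ℤ := (l.map (fun e => e.2.2)).sum

def PosFor {V : Type} {d : ℕ} (l : List (Ent V d)) : Prop :=
  ∃ p h, (∀ e ∈ l, p ++ [h] <+: e.2.1) ∧ bad p h (wsum l) = true

theorem wsum_append {V : Type} {d : ℕ} (a b : List (Ent V d)) :
    wsum (a ++ b) = wsum a + wsum b := by simp [wsum]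

theorem ev_zero (f : ℕ → ℤ) (T : ℕ) (B : ℤ) (h0 : ∀ n ≥ T, 0 ≤ f n)
    (hB : ∀ n, |∑ j ∈ Finset.range n, f j| ≤ B) : ∃ T' ≥ T, ∀ n ≥ T', f n = 0 := by
  by_contra hcon
  push Not at hcon
  have key : ∀ k : ℕ, ∃ n ≥ T, ∑ j ∈ Finset.range T, f j + k ≤ ∑ j ∈ Finset.range n, f j := by
    intro k
    induction k with
    | zero => exact ⟨T, le_rfl, by simp⟩
    | succ k ih =>
      obtain ⟨n, hn, hk⟩ := ih
      obtain ⟨n', hn', hf⟩ := hcon n hn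
      refine ⟨n' + 1, by omega, ?_⟩
      rw [Finset.sum_range_succ]
      have h1 : ∑ j ∈ Finset.range n, f j ≤ ∑ j ∈ Finset.range n', f j := by
        apply Finset.sum_le_sum_of_subset_of_nonneg
        · exact Finset.range_mono hn'
        · intro i _ hi
          apply h0; simp at hi; omega
      have h2 := h0 n' (by omega)
      push_cast
      omega
  obtain ⟨n, _, hn⟩ := key (2 * B + 1).toNat
  have h1 := abs_le.1 (hB n)
  have h2 := abs_le.1 (hB T)
  have := Int.self_le_toNat (2 * B + 1)
  omega

section comb
variable {V : Type} {d : ℕ} (st cy : ℕ → List (Ent V d)) (v : ℕ → V) (e : ℕ → Ent V d)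
  (ℓ : List (Ent V d) → V → List (Fin d → ℤ))

theorem track (h1 : ∀ n, cy n ++ st (n+1) = e n :: st n)
    (hev : ∀ n, (e n).1 = v n)
    (h2 : ∀ n, cy n = [] ∨ PosFor (cy n) ∧ ∃ i x, cy n = i ++ [x] ∧ x.1 = v (n+1))
    (h3 : ∀ n x s, x :: s <:+ e n :: st n → x.2.1 = ℓ s x.1)
    (n0 : ℕ) (x : Ent V d) (s : List (Ent V d)) (hx : x :: s <:+ e n0 :: st n0)
    (n : ℕ) (hn : n0 ≤ n) (hlen : ∀ j, n0 < j → j ≤ n → s.length ≤ (st j).length) :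
    ∃ x' : Ent V d, x' :: s <:+ e n :: st n ∧ x'.1 = x.1 ∧ x'.2.1 = x.2.1 := by
  induction n, hn using Nat.le_induction with
  | base => exact ⟨x, hx, rfl, rfl⟩
  | succ n hn ih =>
    obtain ⟨x', hs, hx1, hx2⟩ := ih (fun j a b => hlen j a (by omega))
    have hl := hlen (n+1) (by omega) le_rfl
    have hsuf : st (n+1) <:+ e n :: st n := ⟨cy n, h1 n⟩
    rcases Nat.lt_or_ge s.length (st (n+1)).length with hlt | hge
    · have : x' :: s <:+ st (n+1) := List.suffix_of_suffix_length_le hs hsuf (by simpa using hlt)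
      exact ⟨x', this.trans (List.suffix_cons _ _), hx1, hx2⟩
    · have hsl : s = st (n+1) := by
        have a : s <:+ st (n+1) := List.suffix_of_suffix_length_le
          ((List.suffix_cons _ _).trans hs) hsuf hl
        exact a.eq_of_length (by omega)
      have hcy : cy n ≠ [] := by
        intro hc
        have := h1 n
        rw [hc, ← hsl, List.nil_append] at this
        rw [← this] at hs
        have := hs.length_le
        simp at this
      rcases h2 n with hc | ⟨_, i, y, hi, hy⟩
      · exact absurd hc hcy
      have hyx : y = x' := by
        have a : y :: s <:+ e n :: st n := ⟨i, by rw [← h1 n, hi, hsl]; simp⟩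
        have := List.suffix_of_suffix_length_le a hs (by simp)
        have := this.eq_of_length (by simp)
        simpa using this
      refine ⟨e (n+1), by rw [hsl], ?_, ?_⟩
      · rw [hev, ← hy, hyx, hx1]
      · rw [h3 (n+1) (e (n+1)) (st (n+1)) List.suffix_rfl, ← hx2, h3 n x' s hs, hsl, hev, ← hy, hyx]

theorem comb (h1 : ∀ n, cy n ++ st (n+1) = e n :: st n)
    (hev : ∀ n, (e n).1 = v n)
    (h2 : ∀ n, cy n = [] ∨ PosFor (cy n) ∧ ∃ i x, cy n = i ++ [x] ∧ x.1 = v (n+1))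
    (h3 : ∀ n x s, x :: s <:+ e n :: st n → x.2.1 = ℓ s x.1)
    (C : ℕ) (h4 : ∀ n, (st n).length ≤ C) (B : ℕ)
    (h5 : ∀ n, vnorm (∑ j ∈ Finset.range n, wsum (cy j)) ≤ B) : False := by
  classical
  have hex : ∃ m, ∀ T, ∃ n ≥ T, (st n).length ≤ m := ⟨C, fun T => ⟨T, le_rfl, h4 T⟩⟩
  obtain ⟨m, hm, hmin⟩ : ∃ m, (∀ T, ∃ n ≥ T, (st n).length ≤ m) ∧
      ∀ m' < m, ¬ ∀ T, ∃ n ≥ T, (st n).length ≤ m' :=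
    ⟨Nat.find hex, Nat.find_spec hex, fun m' h => Nat.find_min hex h⟩
  have hge : ∃ T0, ∀ n ≥ T0, m ≤ (st n).length := by
    rcases Nat.eq_zero_or_pos m with h | h
    · exact ⟨0, by intros; omega⟩
    · have := hmin (m - 1) (by omega)
      push Not at this
      obtain ⟨T0, hT⟩ := this
      exact ⟨T0, fun n hn => by have := hT n hn; omega⟩
  obtain ⟨T0, hT0⟩ := hge
  obtain ⟨T1, hT1, hT1'⟩ := hm T0
  have hT1m : (st T1).length = m := le_antisymm hT1' (hT0 _ hT1)
  obtain ⟨Ls, hLs⟩ : ∃ Ls, Ls = (e T1).2.1 := ⟨_, rfl⟩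
  have claimA : ∀ n ≥ T1, ∀ x s, x :: s <:+ e n :: st n → s.length = m → x.2.1 = Ls := by
    intro n hn x s hx hs
    obtain ⟨x', hx', -, hl⟩ := track st cy v e ℓ h1 hev h2 h3 T1 (e T1) (st T1) List.suffix_rfl n hn
      (fun j a b => by rw [hT1m]; exact hT0 j (by omega))
    have := (List.suffix_of_suffix_length_le hx hx' (by simp; omega)).eq_of_length (by simp; omega)
    have : x = x' := by simp at this; exact this.1
    rw [this, hl, hLs]
  have main : ∀ k, k ≤ Ls.length ∧ ∃ T ≥ T1, ∀ n ≥ T, (∀ x ∈ cy n, x.2.1.take k = Ls.take k) ∧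
      ∀ g ∈ Ls.take k, g ⬝ᵥ wsum (cy n) = 0 := by
    intro k
    induction k with
    | zero => exact ⟨by simp, T1, le_rfl, by simp⟩
    | succ k ih =>
      obtain ⟨hk, T, hT, hP⟩ := ih
      -- structure of cycles
      have hQ : ∀ n ≥ T, cy n ≠ [] → ∃ q : List (Fin d → ℤ), ∃ h', q.length = k ∧
          (∀ x ∈ cy n, x.2.1.take (k+1) = q ++ [h']) ∧ 0 ≤ h' ⬝ᵥ wsum (cy n) := by
        intro n hn hc
        rcases h2 n with h | ⟨⟨p, h, hp, hb⟩, i, y, hi, -⟩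
        · exact absurd h hc
        simp only [bad, decide_eq_true_eq] at hb
        have hy : y ∈ cy n := by rw [hi]; simp
        have hpk : k ≤ p.length := by
          by_contra hlt
          push Not at hlt
          have hmem : h ∈ Ls.take k := by
            rw [← (hP n hn).1 y hy]
            have a : (p ++ [h]) <+: y.2.1.take k := by
              rw [List.prefix_take_iff]; exact ⟨hp y hy, by simp; omega⟩
            exact a.subset (by simp)
          have := (hP n hn).2 h hmem
          omega
        have hlen : ((p ++ [h]).take (k+1)).length = k + 1 := by simp; omega
        have hne : (p ++ [h]).take (k+1) ≠ [] := by intro h0; rw [h0] at hlen; simp at hlen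
        refine ⟨((p ++ [h]).take (k+1)).dropLast, ((p ++ [h]).take (k+1)).getLast hne, ?_, ?_, ?_⟩
        · simp; omega
        · intro x hx
          rw [List.dropLast_append_getLast]
          obtain ⟨r, hr⟩ := hp x hx
          rw [← hr, List.take_append_of_le_length (by simp; omega)]
        · rcases Nat.lt_or_ge k p.length with hlt | hge
          · have : ((p ++ [h]).take (k+1)).getLast hne ∈ p := by
              have e1 : (p ++ [h]).take (k+1) = p.take (k+1) :=
                List.take_append_of_le_length (by omega)
              have := List.getLast_mem hne
              have h6 : ∀ z, z ∈ (p ++ [h]).take (k+1) → z ∈ p := fun z hz => by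
                rw [e1] at hz
                exact List.mem_of_mem_take hz
              exact h6 _ this
            rw [hb.1 _ this]
          · have e1 : (p ++ [h]).take (k+1) = p ++ [h] := List.take_of_length_le (by simp; omega)
            simp only [e1, List.getLast_append_singleton]
            simp [hb.2.le]
      have claimB : ∀ j, ∀ s : List (Ent V d), s.length = j → m ≤ j → ∀ n ≥ T, ∀ x,
          x :: s <:+ e n :: st n → x.2.1.take (k+1) = Ls.take (k+1) := by
        intro j
        induction j using Nat.strong_induction_on with
        | _ j ihj =>
          intro s hs hmj n hn x hx
          rcases Nat.eq_or_lt_of_le hmj with hmj | hmj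
          · rw [claimA n (by omega) x s hx (by omega)]
          have hexn : ∃ n', n < n' ∧ (st n').length < j := by
            obtain ⟨n', a, b⟩ := hm (n+1)
            exact ⟨n', by omega, by omega⟩
          obtain ⟨n', ⟨hn1, hn2⟩, hn3⟩ : ∃ n', (n < n' ∧ (st n').length < j) ∧
              ∀ n'' < n', ¬ (n < n'' ∧ (st n'').length < j) :=
            ⟨Nat.find hexn, Nat.find_spec hexn, fun _ h => Nat.find_min hexn h⟩
          obtain ⟨n', rfl⟩ : ∃ a, n' = a + 1 := ⟨n' - 1, by omega⟩
          obtain ⟨x', hx', -, hl⟩ := track st cy v e ℓ h1 hev h2 h3 n x s hx n' (by omega)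
            (fun j' a b => by
              have := hn3 j' (by omega)
              push Not at this
              have := this a
              omega)
          have hsuf : st (n'+1) <:+ e n' :: st n' := ⟨cy n', h1 n'⟩
          obtain ⟨t2, ht2⟩ := List.suffix_of_suffix_length_le hsuf
            ((List.suffix_cons _ _).trans hx') (by omega)
          have hxc : x' ∈ cy n' := by
            obtain ⟨t, ht⟩ := hx'
            have := h1 n'
            rw [← ht, ← ht2] at this
            have : cy n' = t ++ x' :: t2 := by
              apply List.append_cancel_right (bs := st (n'+1))
              rw [this]; simp
            rw [this]; simp
          rcases h2 n' with h | ⟨-, i, y, hi, -⟩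
          · rw [h] at hxc; simp at hxc
          have hyc : y ∈ cy n' := by rw [hi]; simp
          have hys : y :: st (n'+1) <:+ e n' :: st n' := ⟨i, by rw [← h1 n', hi]; simp⟩
          have hy := ihj _ hn2 (st (n'+1)) rfl (hT0 _ (by omega)) n' (by omega) y hys
          obtain ⟨q, h', -, hq, -⟩ := hQ n' (by omega) (by rw [hi]; simp)
          rw [← hl, hq x' hxc, ← hq y hyc, hy]
      have hall : ∀ n ≥ T, ∀ x ∈ cy n, x.2.1.take (k+1) = Ls.take (k+1) := by
        intro n hn x hx
        obtain ⟨a, b, hab⟩ := List.append_of_mem hx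
        refine claimB _ (b ++ st (n+1)) rfl ?_ n hn x ⟨a, by rw [← h1 n, hab]; simp⟩
        have := hT0 (n+1) (by omega)
        simp; omega
      have hne : ∃ n ≥ T, cy n ≠ [] := by
        by_contra hcon
        push Not at hcon
        have grow : ∀ j, (st (T + j)).length = (st T).length + j := by
          intro j
          induction j with
          | zero => simp
          | succ j ihj =>
            have := h1 (T + j)
            rw [hcon (T+j) (by omega), List.nil_append] at this
            rw [← Nat.add_assoc, this, List.length_cons, ihj]; omega
        have a := grow (C + 1)
        have b := h4 (T + (C + 1))
        omega
      obtain ⟨n1, hn1, hc1⟩ := hne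
      have hLq : ∃ q h', Ls.take (k+1) = q ++ [h'] ∧ q.length = k := by
        obtain ⟨q, h', hqk, hq, -⟩ := hQ n1 hn1 hc1
        obtain ⟨y, hy⟩ := List.exists_mem_of_ne_nil _ hc1
        exact ⟨q, h', by rw [← hall n1 hn1 y hy, hq y hy], hqk⟩
      obtain ⟨q, h', hqh, hqk⟩ := hLq
      have hlen : k + 1 ≤ Ls.length := by
        have := congrArg List.length hqh
        simp at this; omega
      have hqt : q = Ls.take k := by
        have := congrArg (List.take k) hqh
        rw [List.take_take, List.take_append_of_le_length (by omega),
          Nat.min_eq_left (by omega)] at this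
        rw [this, List.take_of_length_le (by omega)]
      refine ⟨hlen, ?_⟩
      have hnn : ∀ n ≥ T, 0 ≤ h' ⬝ᵥ wsum (cy n) := by
        intro n hn
        by_cases hc : cy n = []
        · rw [hc]; simp [wsum]
        · obtain ⟨q2, h2', -, hq2, hpos⟩ := hQ n hn hc
          obtain ⟨y, hy⟩ := List.exists_mem_of_ne_nil _ hc
          have := hall n hn y hy
          rw [hq2 y hy, hqh] at this
          have := (List.append_inj' this rfl).2
          simp at this
          rw [← this]; exact hpos
      obtain ⟨T', hT', hz⟩ := ev_zero (fun n => h' ⬝ᵥ wsum (cy n)) T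
        (d * ((vnorm h' : ℤ) * B)) hnn (by
          intro n
          have : ∑ j ∈ Finset.range n, h' ⬝ᵥ wsum (cy j) =
              h' ⬝ᵥ ∑ j ∈ Finset.range n, wsum (cy j) := by
            rw [dotProduct_sum]
          rw [this]
          exact dot_abs_le _ _ _ _ (abs_le_vnorm h') ((vnorm_le_iff _ _).1 (h5 n)))
      refine ⟨T', by omega, fun n hn => ⟨hall n (by omega), ?_⟩⟩
      intro g hg
      rw [hqh, List.mem_append] at hg
      rcases hg with hg | hg
      · exact (hP n (by omega)).2 g (hqt ▸ hg)
      · simp at hg; rw [hg]; exact hz n hn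
  have := (main (Ls.length + 1)).1
  omega
end comb

end BG
namespace BG

theorem cyc_ex {V : Type} {d : ℕ} (v : V) (st : List (Ent V d)) :
    ∃ cr : List (Ent V d) × List (Ent V d), cr.1 ++ cr.2 = st ∧
      ((cr.1 = [] ∧ v ∉ st.map Prod.fst) ∨
        (∃ i x, cr.1 = i ++ [x] ∧ x.1 = v)) := by
  by_cases h : v ∈ st.map Prod.fst
  · rw [List.mem_map] at h
    obtain ⟨x, hx, rfl⟩ := h
    obtain ⟨a, b, rfl⟩ := List.append_of_mem hx
    exact ⟨(a ++ [x], b), by simp, Or.inr ⟨a, x, rfl, rfl⟩⟩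
  · exact ⟨([], st), rfl, Or.inl ⟨rfl, h⟩⟩

noncomputable def cyc {V : Type} {d : ℕ} (v : V) (st : List (Ent V d)) : List (Ent V d) :=
  (cyc_ex v st).choose.1
noncomputable def rst {V : Type} {d : ℕ} (v : V) (st : List (Ent V d)) : List (Ent V d) :=
  (cyc_ex v st).choose.2

section
variable {V : Type} {d : ℕ}

theorem cyc_rst (v : V) (st : List (Ent V d)) : cyc v st ++ rst v st = st :=
  (cyc_ex v st).choose_spec.1

theorem cyc_cases (v : V) (st : List (Ent V d)) : (cyc v st = [] ∧ v ∉ st.map Prod.fst) ∨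
    (∃ i x, cyc v st = i ++ [x] ∧ x.1 = v) :=
  (cyc_ex v st).choose_spec.2

theorem rst_suffix (v : V) (st : List (Ent V d)) : rst v st <:+ st := ⟨_, cyc_rst v st⟩

theorem rst_nodup (v : V) (st : List (Ent V d)) (h : (st.map Prod.fst).Nodup) :
    (v :: (rst v st).map Prod.fst).Nodup := by
  have hs := cyc_rst v st
  rcases cyc_cases v st with ⟨h1, h2⟩ | ⟨i, x, h1, h2⟩
  · rw [h1, List.nil_append] at hs
    rw [hs, List.nodup_cons]; exact ⟨h2, h⟩
  · rw [h1] at hs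
    rw [← hs] at h
    simp only [List.append_assoc, List.map_append, List.map_cons, List.map_nil] at h
    have := h.of_append_right
    simpa [h2] using this

end

inductive W2 (G : MWG V d) : List (Ent V d) → V → Prop
  | p1 (st : List (Ent V d)) (v : V) (L : List (Fin d → ℤ)) (hv : v ∈ G.P1)
      (h1 : ∀ w v', (v, w, v') ∈ G.E → cyc v' ((v, L, w) :: st) ≠ [] →
        PosFor (cyc v' ((v, L, w) :: st)))
      (h2 : ∀ w v', (v, w, v') ∈ G.E → cyc v' ((v, L, w) :: st) = [] →
        W2 G ((v, L, w) :: st) v') : W2 G st v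
  | p2 (st : List (Ent V d)) (v : V) (L : List (Fin d → ℤ)) (hv : v ∉ G.P1)
      (w : Fin d → ℤ) (v' : V) (he : (v, w, v') ∈ G.E)
      (h1 : cyc v' ((v, L, w) :: st) ≠ [] → PosFor (cyc v' ((v, L, w) :: st)))
      (h2 : cyc v' ((v, L, w) :: st) = [] → W2 G ((v, L, w) :: st) v') : W2 G st v

def Nxt (G : MWG V d) (st : List (Ent V d)) (v' : V) : Prop :=
  (cyc v' st ≠ [] → PosFor (cyc v' st)) ∧ (cyc v' st = [] → W2 G st v')

theorem W2_iff (G : MWG V d) (st : List (Ent V d)) (v : V) : W2 G st v ↔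
    ∃ L, (v ∈ G.P1 ∧ ∀ w v', (v, w, v') ∈ G.E → Nxt G ((v, L, w) :: st) v') ∨
      (v ∉ G.P1 ∧ ∃ w v', (v, w, v') ∈ G.E ∧ Nxt G ((v, L, w) :: st) v') := by
  constructor
  · intro h
    cases h with
    | p1 _ _ L hv h1 h2 => exact ⟨L, Or.inl ⟨hv, fun w v' he => ⟨h1 w v' he, h2 w v' he⟩⟩⟩
    | p2 _ _ L hv w v' he h1 h2 => exact ⟨L, Or.inr ⟨hv, w, v', he, h1, h2⟩⟩
  · rintro ⟨L, ⟨hv, h⟩ | ⟨hv, w, v', he, h⟩⟩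
    · exact W2.p1 st v L hv (fun w v' he => (h w v' he).1) (fun w v' he => (h w v' he).2)
    · exact W2.p2 st v L hv w v' he h.1 h.2

theorem vnorm_edge (G : MWG V d) {v v' : V} {w : Fin d → ℤ} (h : (v, w, v') ∈ G.E) :
    vnorm w ≤ enorm G := by
  have : (v, w, v') ∈ G.finE.toFinset := by simpa using h
  exact Finset.le_sup (f := fun e : V × (Fin d → ℤ) × V => vnorm e.2.1) this

theorem vnorm_wsum (N : ℕ) (l : List (Ent V d)) (h : ∀ x ∈ l, vnorm x.2.2 ≤ N) :
    vnorm (wsum l) ≤ l.length * N := by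
  unfold wsum
  have := vnorm_sum_le N (l.map (fun e => e.2.2)) (by
    intro u hu
    rw [List.mem_map] at hu
    obtain ⟨x, hx, rfl⟩ := hu
    exact h x hx)
  simpa using this

theorem nodup_len (l : List (Ent V d)) (h : (l.map Prod.fst).Nodup) :
    l.length ≤ Fintype.card V := by
  have := h.length_le_card
  simpa using this

theorem vnorm_neg (u : Fin d → ℤ) : vnorm (-u) = vnorm u := by
  simp [vnorm]

/-- Player 2 side -/
theorem p2_side (G : MWG V d) (v₀ : V) (h : W2 G [] v₀) : ¬ P1WinsBounding G v₀ := by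
  classical
  rintro ⟨σ, hσ, hwin⟩
  have hch : ∀ st v, ∃ (L : List (Fin d → ℤ)) (mv : (Fin d → ℤ) × V), W2 G st v →
      (v ∈ G.P1 → ∀ w v', (v, w, v') ∈ G.E → Nxt G ((v, L, w) :: st) v') ∧
      (v ∉ G.P1 → (v, mv.1, mv.2) ∈ G.E ∧ Nxt G ((v, L, mv.1) :: st) mv.2) := by
    intro st v
    by_cases hw : W2 G st v
    · obtain ⟨L, ⟨hv, h⟩ | ⟨hv, w, v', he, h⟩⟩ := (W2_iff G st v).1 hw
      · exact ⟨L, (0, v), fun _ => ⟨fun _ => h, fun hn => absurd hv hn⟩⟩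
      · exact ⟨L, (w, v'), fun _ => ⟨fun hn => absurd hn hv, fun _ => ⟨he, h⟩⟩⟩
    · exact ⟨[], (0, v), fun h => absurd h hw⟩
  choose ℓ mv hℓ using hch
  let move : List (Conf V d) → Conf V d → List (Ent V d) → (Fin d → ℤ) × V := fun h c st =>
    if c.1 ∈ G.P1 then σ h c else mv st c.1
  let ent : List (Conf V d) → Conf V d → List (Ent V d) → Ent V d := fun h c st =>
    (c.1, ℓ st c.1, (move h c st).1)
  let S : ℕ → List (Conf V d) × Conf V d × List (Ent V d) := fun n =>
    Nat.rec ([], (v₀, 0), []) (fun _ s => (s.1 ++ [s.2.1],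
      ((move s.1 s.2.1 s.2.2).2, s.2.1.2 + (move s.1 s.2.1 s.2.2).1),
      rst (move s.1 s.2.1 s.2.2).2 (ent s.1 s.2.1 s.2.2 :: s.2.2))) n
  obtain ⟨ρ, hρ⟩ : ∃ ρ : ℕ → Conf V d, ∀ n, ρ n = (S n).2.1 := ⟨_, fun _ => rfl⟩
  obtain ⟨st, hst⟩ : ∃ st : ℕ → List (Ent V d), ∀ n, st n = (S n).2.2 := ⟨_, fun _ => rfl⟩
  have hS1 : ∀ n, (S n).1 = hist ρ n := by
    intro n
    induction n with
    | zero => simp [S, hist]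
    | succ n ih =>
      have : (S (n+1)).1 = (S n).1 ++ [(S n).2.1] := rfl
      rw [this, ih, ← hρ]
      simp [hist, List.range_succ]
  obtain ⟨M, hM⟩ : ∃ M : ℕ → (Fin d → ℤ) × V, ∀ n, M n = move (hist ρ n) (ρ n) (st n) :=
    ⟨_, fun _ => rfl⟩
  obtain ⟨e, he⟩ : ∃ e : ℕ → Ent V d, ∀ n, e n = ((ρ n).1, ℓ (st n) (ρ n).1, (M n).1) :=
    ⟨_, fun _ => rfl⟩
  have hρs : ∀ n, ρ (n+1) = ((M n).2, (ρ n).2 + (M n).1) := by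
    intro n
    rw [hM, ← hS1, hst, hρ n, hρ (n+1)]
  have hsts : ∀ n, st (n+1) = rst (ρ (n+1)).1 (e n :: st n) := by
    intro n
    rw [hρs, he, hM, ← hS1, hst, hst, hρ n]
  have hρ0 : ρ 0 = (v₀, 0) := by rw [hρ]; rfl
  have hst0 : st 0 = [] := by rw [hst]; rfl
  have hstep : ∀ n, IsPathL G (hist ρ n ++ [ρ n]) → W2 G (st n) (ρ n).1 →
      ((ρ n).1, (M n).1, (M n).2) ∈ G.E ∧ Nxt G (e n :: st n) (M n).2 := by
    intro n hp hw
    obtain ⟨a, b⟩ := hℓ (st n) (ρ n).1 hw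
    rw [he]
    by_cases hv : (ρ n).1 ∈ G.P1
    · have hm : M n = σ (hist ρ n) (ρ n) := by rw [hM]; simp only [move]; rw [if_pos hv]
      have := hσ (hist ρ n) (ρ n) hp hv
      rw [← hm] at this
      exact ⟨this, a hv _ _ this⟩
    · have hm : M n = mv (st n) (ρ n).1 := by rw [hM]; simp only [move]; rw [if_neg hv]
      rw [hm]
      exact b hv
  have inv : ∀ n, IsPathL G (hist ρ n ++ [ρ n]) ∧ W2 G (st n) (ρ n).1 ∧
      ((ρ n).1 :: (st n).map Prod.fst).Nodup ∧
      (∀ x s, x :: s <:+ st n → W2 G s x.1 ∧ x.2.1 = ℓ s x.1) ∧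
      (∀ x ∈ st n, vnorm x.2.2 ≤ enorm G) ∧
      (ρ n).2 = wsum (st n) + ∑ j ∈ Finset.range n, wsum (cyc (ρ (j+1)).1 (e j :: st j)) := by
    intro n
    induction n with
    | zero =>
      rw [hst0, hρ0]
      refine ⟨List.isChain_singleton _, h, by simp, by simp, by simp, by simp [wsum]⟩
    | succ n ih =>
      obtain ⟨i1, i2, i3, i4, i5, i6⟩ := ih
      obtain ⟨k1, k2⟩ := hstep n i1 i2
      have hM2 : (M n).2 = (ρ (n+1)).1 := by rw [hρs]
      rw [hM2] at k1 k2
      have hcr := cyc_rst (ρ (n+1)).1 (e n :: st n)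
      have hi4 : ∀ x s, x :: s <:+ e n :: st n → W2 G s x.1 ∧ x.2.1 = ℓ s x.1 := by
        intro x s hx
        rcases List.suffix_cons_iff.1 hx with hx | hx
        · simp only [List.cons.injEq] at hx
          rw [hx.1, hx.2, he]
          exact ⟨i2, rfl⟩
        · exact i4 x s hx
      have hi5 : ∀ x ∈ e n :: st n, vnorm x.2.2 ≤ enorm G := by
        intro x hx
        rcases List.mem_cons.1 hx with rfl | hx
        · rw [he]; exact vnorm_edge G k1
        · exact i5 x hx
      refine ⟨?_, ?_, ?_, ?_, ?_, ?_⟩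
      · have hh : hist ρ (n+1) = hist ρ n ++ [ρ n] := by simp [hist, List.range_succ]
        have hs : Step G (ρ n) (ρ (n+1)) := by
          unfold Step
          have : (ρ (n+1)).2 - (ρ n).2 = (M n).1 := by rw [hρs]; simp
          rw [this]; exact k1
        rw [hh]
        refine List.isChain_append.2 ⟨i1, List.isChain_singleton _, ?_⟩
        intro x hx y hy
        simp at hx hy
        rw [← hx, ← hy]; exact hs
      · rw [hsts]
        rcases cyc_cases (ρ (n+1)).1 (e n :: st n) with ⟨c1, c2⟩ | ⟨i, x, c1, c2⟩
        · rw [c1, List.nil_append] at hcr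
          rw [hcr]
          exact k2.2 c1
        · have := (hi4 x (rst (ρ (n+1)).1 (e n :: st n)) ⟨i, by
            conv_rhs => rw [← hcr, c1]
            simp⟩).1
          rw [c2] at this
          exact this
      · rw [hsts]
        apply rst_nodup
        simpa [he] using i3
      · intro x s hx
        rw [hsts] at hx
        exact hi4 x s (hx.trans (rst_suffix _ _))
      · intro x hx
        rw [hsts] at hx
        exact hi5 x ((rst_suffix _ _).subset hx)
      · have hw : wsum (e n :: st n) = (M n).1 + wsum (st n) := by simp [wsum, he]
        rw [Finset.sum_range_succ, hsts]
        have h7 : wsum (cyc (ρ (n+1)).1 (e n :: st n)) + wsum (rst (ρ (n+1)).1 (e n :: st n)) =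
            (M n).1 + wsum (st n) := by rw [← wsum_append, hcr, hw]
        have h8 : (ρ (n+1)).2 = (ρ n).2 + (M n).1 := by rw [hρs]
        rw [h8, i6]
        linear_combination -h7
  have hplay : IsPlay G v₀ ρ := by
    refine ⟨hρ0, fun n => ?_⟩
    unfold Step
    have := (hstep n (inv n).1 (inv n).2.1).1
    rw [hρs]; simpa using this
  have hcons : Consistent (G.P1 : Set V) σ ρ := by
    intro n hv
    have hm : M n = σ (hist ρ n) (ρ n) := by rw [hM]; simp only [move]; rw [if_pos (by simpa using hv)]
    rw [hρs, hm]
  obtain ⟨B, hB⟩ := hwin ρ hplay hcons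
  have hlen : ∀ n, (st n).length ≤ Fintype.card V := fun n =>
    nodup_len _ (List.nodup_cons.1 (inv n).2.2.1).2
  refine comb st (fun n => cyc (ρ (n+1)).1 (e n :: st n)) (fun n => (ρ n).1) e ℓ ?_ ?_ ?_ ?_
    (Fintype.card V) hlen (B + Fintype.card V * enorm G) ?_
  · intro n
    rw [hsts]; exact cyc_rst _ _
  · intro n; rw [he]
  · intro n
    have := (hstep n (inv n).1 (inv n).2.1).2
    have hM2 : (M n).2 = (ρ (n+1)).1 := by rw [hρs]
    rw [hM2] at this
    rcases cyc_cases (ρ (n+1)).1 (e n :: st n) with ⟨c1, c2⟩ | ⟨i, x, c1, c2⟩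
    · exact Or.inl c1
    · exact Or.inr ⟨this.1 (by rw [c1]; simp), i, x, c1, c2⟩
  · intro n x s hx
    rcases List.suffix_cons_iff.1 hx with hx | hx
    · simp only [List.cons.injEq] at hx
      rw [hx.1, hx.2, he]
    · exact ((inv n).2.2.2.1 x s hx).2
  · intro n
    obtain ⟨-, -, -, -, i5, i6⟩ := inv n
    have : ∑ j ∈ Finset.range n, wsum (cyc (ρ (j+1)).1 (e j :: st j)) =
        (ρ n).2 + -wsum (st n) := by rw [i6]; abel
    rw [this]
    refine (vnorm_add_le _ _).trans ?_
    rw [vnorm_neg]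
    have h9 := vnorm_wsum (enorm G) (st n) i5
    have h10 : (st n).length * enorm G ≤ Fintype.card V * enorm G := Nat.mul_le_mul_right _ (hlen n)
    have := hB n
    omega

end BG
namespace BG

noncomputable def stp (κ : List (Fin d → ℤ) → List (Fin d → ℤ))
    (s : List (Ent V d) × List (Fin d → ℤ)) (c c' : Conf V d) :
    List (Ent V d) × List (Fin d → ℤ) :=
  (rst c'.1 ((c.1, κ s.2, c'.2 - c.2) :: s.1),
    s.2 ++ [wsum (cyc c'.1 ((c.1, κ s.2, c'.2 - c.2) :: s.1))])

noncomputable def run (κ : List (Fin d → ℤ) → List (Fin d → ℤ)) :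
    List (Conf V d) → List (Ent V d) × List (Fin d → ℤ)
  | [] => ([], [])
  | [_] => ([], [])
  | c' :: c :: t => stp κ (run κ (c :: t)) c c'

theorem ctlOK_of (κ : List (Fin d → ℤ) → List (Fin d → ℤ)) (c : ℕ)
    (st cy : ℕ → List (Ent V d)) (e : ℕ → Ent V d) (us : ℕ → List (Fin d → ℤ))
    (h1 : ∀ n, cy n ++ st (n+1) = e n :: st n) (h2 : ∀ n, ¬ PosFor (cy n))
    (h3 : ∀ n, (e n).2.1 = κ (us n)) (h4 : ∀ n, (st n).length ≤ c) (h0 : us 0 = [])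
    (hs : ∀ n, us (n+1) = us n ++ [wsum (cy n)]) (n : ℕ) : CtlOK c κ (us n) := by
  have hpre : ∀ n, ∀ l, l <+: us n → ∃ m, l = us m := by
    intro n
    induction n with
    | zero => intro l hl; rw [h0] at hl; exact ⟨0, by rw [h0]; simpa using hl⟩
    | succ n ih =>
      intro l hl
      rw [hs, List.prefix_concat_iff] at hl
      rcases hl with hl | hl
      · exact ⟨n+1, by rw [hs, hl]⟩
      · exact ih l hl
  have key : ∀ n pre mid p h, us n = pre ++ mid →
      (∀ m1 x, m1 ++ [x] <+: mid → p ++ [h] <+: κ (pre ++ m1)) →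
      ∃ new old, st n = new ++ old ∧ (∀ x ∈ new, p ++ [h] <+: x.2.1) ∧
        old.length + mid.countP (bad p h) ≤ c := by
    intro n
    induction n with
    | zero =>
      intro pre mid p h hus hl
      rw [h0] at hus
      have : mid = [] := by simp at hus; exact hus.2
      subst this
      exact ⟨[], st 0, rfl, by simp, by simpa using h4 0⟩
    | succ n ih =>
      intro pre mid p h hus hl
      rcases List.eq_nil_or_concat mid with rfl | ⟨mid, x, rfl⟩
      · exact ⟨[], st (n+1), rfl, by simp, by simpa using h4 (n+1)⟩
      rw [hs] at hus
      simp only [List.concat_eq_append] at hus hl ⊢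
      rw [← List.append_assoc] at hus
      obtain ⟨hus1, hus2⟩ := List.append_inj' hus rfl
      simp only [List.cons.injEq, and_true] at hus2
      obtain ⟨new, old, g1, g2, g3⟩ := ih pre mid p h hus1 (fun m1 y hm =>
        hl m1 y (hm.trans (List.prefix_append _ _)))
      have hen : p ++ [h] <+: (e n).2.1 := by
        rw [h3, hus1]; exact hl mid x List.prefix_rfl
      have hall : ∀ y ∈ e n :: new, p ++ [h] <+: y.2.1 := by
        intro y hy
        rcases List.mem_cons.1 hy with rfl | hy
        · exact hen
        · exact g2 y hy
      have heq : cy n ++ st (n+1) = (e n :: new) ++ old := by rw [h1, g1]; rfl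
      by_cases hlen : (cy n).length ≤ (e n :: new).length
      · obtain ⟨c', hc', ho⟩ : ∃ c', e n :: new = cy n ++ c' ∧ st (n+1) = c' ++ old := by
          obtain ⟨c', hc'⟩ := List.prefix_of_prefix_length_le
            (⟨_, heq⟩ : cy n <+: (e n :: new) ++ old) (List.prefix_append _ _) hlen
          refine ⟨c', hc'.symm, ?_⟩
          rw [← hc', List.append_assoc] at heq
          exact List.append_cancel_left heq
        refine ⟨c', old, ho, fun y hy => hall y (by rw [hc']; simp [hy]), ?_⟩
        have hb : bad p h x = false := by
          by_contra hb
          rw [Bool.not_eq_false] at hb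
          exact h2 n ⟨p, h, fun y hy => hall y (by rw [hc']; simp [hy]), by rw [hus2]; exact hb⟩
        simp [List.countP_append, hb]
        exact g3
      · refine ⟨[], st (n+1), rfl, by simp, ?_⟩
        have := congrArg List.length heq
        simp only [List.length_append] at this
        have h8 : (mid ++ [x]).countP (bad p h) ≤ mid.countP (bad p h) + 1 := by
          rw [List.countP_append]
          have := List.countP_le_length (p := bad p h) (l := [x])
          simp at this
          simpa using this
        omega
  intro pre mid hpm p h hl
  obtain ⟨m, hm⟩ := hpre n _ hpm
  obtain ⟨_, old, _, _, h⟩ := key m pre mid p h hm.symm hl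
  omega

theorem not_W2 (G : MWG V d) (st : List (Ent V d)) (v : V) (L : List (Fin d → ℤ))
    (h : ¬ W2 G st v) :
    (v ∈ G.P1 → ∃ m : (Fin d → ℤ) × V, (v, m.1, m.2) ∈ G.E ∧ ¬ Nxt G ((v, L, m.1) :: st) m.2) ∧
    (v ∉ G.P1 → ∀ w v', (v, w, v') ∈ G.E → ¬ Nxt G ((v, L, w) :: st) v') := by
  rw [W2_iff] at h
  push Not at h
  obtain ⟨a, b⟩ := h L
  refine ⟨fun hv => ?_, b⟩
  obtain ⟨w, v', h1, h2⟩ := a hv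
  exact ⟨(w, v'), h1, h2⟩

theorem not_posFor_nil : ¬ PosFor ([] : List (Ent V d)) := by
  rintro ⟨p, h, -, hb⟩
  simp [bad, wsum] at hb

theorem p1_side (G : MWG V d) (v₀ : V) (κ : List (Fin d → ℤ) → List (Fin d → ℤ))
    (h : ¬ W2 G [] v₀) : ∃ σ : Strat V d, ValidStrat G (G.P1 : Set V) σ ∧
      ∀ ρ, IsPlay G v₀ ρ → Consistent (G.P1 : Set V) σ ρ → ∀ n,
        ∃ (us : List (Fin d → ℤ)) (r : Fin d → ℤ), (ρ n).2 = us.sum + r ∧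
          (∀ u ∈ us, vnorm u ≤ Fintype.card V * enorm G) ∧
          vnorm r ≤ Fintype.card V * enorm G ∧ CtlOK (Fintype.card V) κ us := by
  classical
  have hch : ∀ (s : List (Ent V d) × List (Fin d → ℤ)) (v : V), ∃ m : (Fin d → ℤ) × V,
      (v, m.1, m.2) ∈ G.E ∧ (¬ W2 G s.1 v → v ∈ G.P1 →
        ¬ Nxt G ((v, κ s.2, m.1) :: s.1) m.2) := by
    intro s v
    by_cases hw : ¬ W2 G s.1 v ∧ v ∈ G.P1
    · obtain ⟨m, h1, h2⟩ := (not_W2 G s.1 v (κ s.2) hw.1).1 hw.2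
      exact ⟨m, h1, fun _ _ => h2⟩
    · obtain ⟨w, v', hE⟩ := G.serial v
      exact ⟨(w, v'), hE, fun a b => absurd ⟨a, b⟩ hw⟩
  choose mv hmE hmN using hch
  refine ⟨fun h c => mv (run κ (c :: h.reverse)) c.1, fun h c _ _ => hmE _ _, ?_⟩
  intro ρ hplay hcons
  obtain ⟨T, hT⟩ : ∃ T : ℕ → List (Ent V d) × List (Fin d → ℤ),
      ∀ n, T n = run κ (ρ n :: (hist ρ n).reverse) := ⟨_, fun _ => rfl⟩
  have hT0 : T 0 = ([], []) := by rw [hT]; rfl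
  have hTs : ∀ n, T (n+1) = stp κ (T n) (ρ n) (ρ (n+1)) := by
    intro n
    have hh : hist ρ (n+1) = hist ρ n ++ [ρ n] := by simp [hist, List.range_succ]
    rw [hT (n+1), hT n, hh, List.reverse_append]
    rfl
  obtain ⟨st, hst⟩ : ∃ st : ℕ → List (Ent V d), ∀ n, st n = (T n).1 := ⟨_, fun _ => rfl⟩
  obtain ⟨us, hus⟩ : ∃ us : ℕ → List (Fin d → ℤ), ∀ n, us n = (T n).2 := ⟨_, fun _ => rfl⟩
  obtain ⟨e, he⟩ : ∃ e : ℕ → Ent V d, ∀ n, e n =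
    ((ρ n).1, κ (us n), (ρ (n+1)).2 - (ρ n).2) := ⟨_, fun _ => rfl⟩
  obtain ⟨cy, hcy⟩ : ∃ cy : ℕ → List (Ent V d), ∀ n, cy n =
    cyc (ρ (n+1)).1 (e n :: st n) := ⟨_, fun _ => rfl⟩
  have hsts : ∀ n, st (n+1) = rst (ρ (n+1)).1 (e n :: st n) := by
    intro n; rw [hst (n+1), hTs, he, hst, hus]; rfl
  have huss : ∀ n, us (n+1) = us n ++ [wsum (cy n)] := by
    intro n; rw [hus (n+1), hTs, hcy, he, hst, hus]; rfl
  have hstep : ∀ n, ¬ W2 G (st n) (ρ n).1 → ¬ Nxt G (e n :: st n) (ρ (n+1)).1 := by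
    intro n hw
    by_cases hv : (ρ n).1 ∈ G.P1
    · have hc := hcons n hv
      simp only at hc
      rw [← hT] at hc
      have := hmN (T n) (ρ n).1 (by rw [← hst]; exact hw) hv
      rw [he, hc, hus, hst]
      simpa using this
    · rw [he]
      exact (not_W2 G _ _ (κ (us n)) hw).2 hv _ _ (hplay.2 n)
  have inv : ∀ n, ¬ W2 G (st n) (ρ n).1 ∧ ((ρ n).1 :: (st n).map Prod.fst).Nodup ∧
      (∀ x s, x :: s <:+ st n → ¬ W2 G s x.1) ∧ (∀ x ∈ st n, vnorm x.2.2 ≤ enorm G) ∧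
      (∀ u ∈ us n, vnorm u ≤ Fintype.card V * enorm G) ∧
      (ρ n).2 = (us n).sum + wsum (st n) := by
    intro n
    induction n with
    | zero =>
      rw [hst, hus, hT0, hplay.1]
      refine ⟨h, by simp, by simp, by simp, by simp, by simp [wsum]⟩
    | succ n ih =>
      obtain ⟨i2, i3, i4, i5, i6, i7⟩ := ih
      have k2 := hstep n i2
      have hcr := cyc_rst (ρ (n+1)).1 (e n :: st n)
      have hi4 : ∀ x s, x :: s <:+ e n :: st n → ¬ W2 G s x.1 := by
        intro x s hx
        rcases List.suffix_cons_iff.1 hx with hx | hx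
        · simp only [List.cons.injEq] at hx
          rw [hx.1, hx.2, he]
          exact i2
        · exact i4 x s hx
      have hi5 : ∀ x ∈ e n :: st n, vnorm x.2.2 ≤ enorm G := by
        intro x hx
        rcases List.mem_cons.1 hx with rfl | hx
        · rw [he]; exact vnorm_edge G (hplay.2 n)
        · exact i5 x hx
      have hnd : ((e n :: st n).map Prod.fst).Nodup := by simpa [he] using i3
      refine ⟨?_, ?_, ?_, ?_, ?_, ?_⟩
      · rw [hsts]
        rcases cyc_cases (ρ (n+1)).1 (e n :: st n) with ⟨c1, c2⟩ | ⟨i, x, c1, c2⟩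
        · rw [c1, List.nil_append] at hcr
          rw [hcr]
          intro hw
          exact k2 ⟨fun hne => absurd c1 hne, fun _ => hw⟩
        · have := (hi4 x (rst (ρ (n+1)).1 (e n :: st n)) ⟨i, by
            conv_rhs => rw [← hcr, c1]
            simp⟩)
          rw [c2] at this
          exact this
      · rw [hsts]
        exact rst_nodup _ _ hnd
      · intro x s hx
        rw [hsts] at hx
        exact hi4 x s (hx.trans (rst_suffix _ _))
      · intro x hx
        rw [hsts] at hx
        exact hi5 x ((rst_suffix _ _).subset hx)
      · intro u hu
        rw [huss, List.mem_append] at hu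
        rcases hu with hu | hu
        · exact i6 u hu
        · rw [List.mem_singleton] at hu
          have hp : cy n <+: e n :: st n := ⟨_, by rw [hcy]; exact hcr⟩
          rw [hu]
          refine (vnorm_wsum (enorm G) _ (fun x hx => hi5 x (hp.subset hx))).trans ?_
          exact Nat.mul_le_mul_right _ (hp.length_le.trans (nodup_len _ hnd))
      · have hw : wsum (e n :: st n) = ((ρ (n+1)).2 - (ρ n).2) + wsum (st n) := by
          simp [wsum, he]
        have h7 : wsum (cy n) + wsum (st (n+1)) =
            ((ρ (n+1)).2 - (ρ n).2) + wsum (st n) := by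
          rw [hcy, hsts, ← wsum_append, hcr, hw]
        rw [huss, List.sum_append, List.sum_singleton]
        linear_combination -h7 + i7
  have hlen : ∀ n, (st n).length ≤ Fintype.card V := fun n =>
    nodup_len _ (List.nodup_cons.1 (inv n).2.1).2
  intro n
  refine ⟨us n, wsum (st n), (inv n).2.2.2.2.2, (inv n).2.2.2.2.1, ?_, ?_⟩
  · exact (vnorm_wsum (enorm G) _ (inv n).2.2.2.1).trans (Nat.mul_le_mul_right _ (hlen n))
  · refine ctlOK_of κ _ st cy e us ?_ ?_ ?_ hlen ?_ huss n
    · intro n; rw [hcy, hsts]; exact cyc_rst _ _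
    · intro n hp
      have := hstep n (inv n).1
      apply this
      rw [hcy] at hp
      refine ⟨fun _ => hp, fun hnil => ?_⟩
      rw [hnil] at hp
      exact absurd hp not_posFor_nil
    · intro n; rw [he]
    · rw [hus, hT0]

theorem final_bound (d N : ℕ) (hd : 1 ≤ d) (hN : 1 ≤ N) :
    Rb ((12 * d * N) ^ (d + 2)) d + N ≤ (4 * N) ^ (2 * (d + 2) ^ 3) := by
  have h12 : 12 * d * N ≤ (4 * N) ^ (d + 2) := by
    have h1 : 12 * d ≤ 4 ^ (d + 2) := by
      have : d < 4 ^ d := Nat.lt_pow_self (by norm_num)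
      rw [pow_add]; omega
    calc 12 * d * N ≤ 4 ^ (d + 2) * N ^ (d + 2) :=
          Nat.mul_le_mul h1 (Nat.le_self_pow (by omega) N)
      _ = _ := by rw [mul_pow]
  have hone : 2 ≤ 12 * d * N := by nlinarith
  have hX : 12 * d * N ≤ (12 * d * N) ^ (d + 2) := Nat.le_self_pow (by omega) _
  have hb := Rb_bound ((12 * d * N) ^ (d + 2)) (by omega) d
  have hNX : N ≤ (12 * d * N) ^ (d + 2) := by
    refine le_trans ?_ hX
    nlinarith
  calc Rb ((12 * d * N) ^ (d + 2)) d + N ≤ ((12 * d * N) ^ (d + 2)) ^ (2 * d + 1) := by omega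
    _ ≤ (((4 * N) ^ (d + 2)) ^ (d + 2)) ^ (2 * d + 1) := by gcongr
    _ = (4 * N) ^ ((d + 2) * (d + 2) * (2 * d + 1)) := by rw [← pow_mul, ← pow_mul, mul_assoc]
    _ ≤ (4 * N) ^ (2 * (d + 2) ^ 3) := by
      apply Nat.pow_le_pow_right (by omega)
      have : 2 * (d + 2) ^ 3 = (d + 2) * (d + 2) * (2 * d + 4) := by ring
      rw [this]
      exact Nat.mul_le_mul_left _ (by omega)

theorem fwd (G : MWG V d) (hE : 0 < enorm G) (v₀ : V) (hw : P1WinsBounding G v₀) :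
      ∃ σ : Strat V d, ValidStrat G (G.P1 : Set V) σ ∧
        ∀ ρ, IsPlay G v₀ ρ → Consistent (G.P1 : Set V) σ ρ →
          ∀ n, vnorm ((ρ n).2) ≤ (4 * Fintype.card V * enorm G) ^ (2 * (d + 2)^3) := by
  have hd : 1 ≤ d := by
    rcases Nat.eq_zero_or_pos d with rfl | h
    · exfalso
      have : enorm G = 0 := by
        unfold _root_.enorm
        rw [← Nat.le_zero]
        exact Finset.sup_le (fun e _ => by simp [vnorm])
      omega
    · exact h
  have hV : 1 ≤ Fintype.card V := Fintype.card_pos_iff.2 ⟨v₀⟩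
  have hcN : Fintype.card V ≤ Fintype.card V * enorm G := Nat.le_mul_of_pos_right _ hE
  obtain ⟨κ, hκ⟩ := ctl (Fintype.card V * enorm G) (Fintype.card V) hd (by omega) hcN d
    (⊤ : Submodule ℚ (Fin d → ℚ)) (by simp)
  obtain ⟨σ, h1, h2⟩ := p1_side G v₀ κ (fun h => p2_side G v₀ h hw)
  refine ⟨σ, h1, fun ρ hp hc n => ?_⟩
  obtain ⟨us, r, e1, e2, e3, e4⟩ := h2 ρ hp hc n
  have := hκ us (fun u hu => ⟨e2 u hu, Submodule.mem_top⟩) e4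
  rw [e1]
  have hf := final_bound d _ hd (le_trans hV hcN)
  rw [← mul_assoc 4] at hf
  refine (vnorm_add_le _ _).trans (le_trans ?_ hf)
  omega

end BG
/-- with `B := (4|V|·‖E‖)^(2(d+2)³)`, Player 1 wins the
bounding game from `v₀` iff she has a strategy from `v₀` such that every
consistent play `ρ` satisfies `‖w(ρ|ₙ)‖ ≤ B` for all `n` (so the bounding
game is equivalent to the safety game where Player 2 attempts to see the
norm of the total weight exceed `B`). -/
theorem bounding_iff_safety_with_small_hypercube
    (V : Type) [Fintype V] [DecidableEq V] (d : ℕ) (G : MWG V d)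
    (hE : 0 < enorm G) (hcyc : EveryCycleHasP1 G) (v₀ : V) :
    P1WinsBounding G v₀ ↔
      ∃ σ : Strat V d, ValidStrat G (G.P1 : Set V) σ ∧
        ∀ ρ, IsPlay G v₀ ρ → Consistent (G.P1 : Set V) σ ρ →
          ∀ n, vnorm ((ρ n).2) ≤ (4 * Fintype.card V * enorm G) ^ (2 * (d + 2)^3) := by
  constructor
  · exact BG.fwd G hE v₀
  · rintro ⟨σ, h1, h2⟩
    exact ⟨σ, h1, fun ρ hp hc => ⟨_, h2 ρ hp hc⟩⟩
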